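/- arXiv:1701.06451 — 3 statements merged into one kernel-verified Lean document; each statement's English description precedes it below -/
import Mathlib

section
/- Let r ≥ 2 and let H be a 3-partite 3-graph with vertex classes A, B, C such that |A| = n, and let ε ≥ 0. Suppose every vertex of A has degree at least r and every vertex of B ∪ C has degree at most r. If ν(H) ≤ (1 + ε)·n/2, then the link lk A (a bipartite multigraph on vertex classes B and C) contains at least (1 − (6r − 7)ε)·n/2 connected components that are r-regular C4's. -/
namespace Tripartite

/-- The degree of a vertex `a` in the first class of a 3-partite 3-multihypergraph,
whose edges are given as a multiset of triples (so parallel edges are allowed). -/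
def deg1 {α β γ : Type*} [DecidableEq α] (H : Multiset (α × β × γ)) (a : α) : ℕ :=
  (H.filter fun e => e.1 = a).card

/-- The degree of a vertex `b` in the second class. -/
def deg2 {α β γ : Type*} [DecidableEq β] (H : Multiset (α × β × γ)) (b : β) : ℕ :=
  (H.filter fun e => e.2.1 = b).card

/-- The degree of a vertex `c` in the third class. -/
def deg3 {α β γ : Type*} [DecidableEq γ] (H : Multiset (α × β × γ)) (c : γ) : ℕ :=
  (H.filter fun e => e.2.2 = c).card

/-- `H` is `r`-regular: every vertex of every class has degree exactly `r`. -/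
def IsRegular {α β γ : Type*} [DecidableEq α] [DecidableEq β] [DecidableEq γ]
    (H : Multiset (α × β × γ)) (r : ℕ) : Prop :=
  (∀ a, deg1 H a = r) ∧ (∀ b, deg2 H b = r) ∧ (∀ c, deg3 H c = r)

/-- A matching of `H`: a set of edges of `H` that are pairwise disjoint. -/
def IsMatching {α β γ : Type*} (H : Multiset (α × β × γ)) (M : Finset (α × β × γ)) : Prop :=
  (∀ e ∈ M, e ∈ H) ∧
  ∀ e ∈ M, ∀ f ∈ M, e ≠ f → e.1 ≠ f.1 ∧ e.2.1 ≠ f.2.1 ∧ e.2.2 ≠ f.2.2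

/-- The matching number ν(H): the maximum size of a matching of `H`. -/
noncomputable def matchNum {α β γ : Type*} (H : Multiset (α × β × γ)) : ℕ :=
  sSup {k | ∃ M : Finset (α × β × γ), IsMatching H M ∧ M.card = k}

/-- The link of the first vertex class: the bipartite multigraph on the other two classes
obtained by deleting from each edge its vertex in the first class. -/
def linkA {α β γ : Type*} (H : Multiset (α × β × γ)) : Multiset (β × γ) :=
  H.map fun e => (e.2.1, e.2.2)

/-- The vertices `b, b', c, c'` span a connected component of the bipartite multigraph `G`
which is an `r`-regular `C₄`: a cycle of length 4 together with edges parallel to the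
edges of the cycle, such that every vertex has degree exactly `r`. -/
def IsRegC4Component {β γ : Type*} [DecidableEq β] [DecidableEq γ]
    (G : Multiset (β × γ)) (r : ℕ) (b b' : β) (c c' : γ) : Prop :=
  b ≠ b' ∧ c ≠ c' ∧
  ∃ k1 k2 k3 k4 : ℕ, 0 < k1 ∧ 0 < k2 ∧ 0 < k3 ∧ 0 < k4 ∧
    k1 + k2 = r ∧ k3 + k4 = r ∧ k1 + k3 = r ∧ k2 + k4 = r ∧
    G.filter (fun e => e.1 = b ∨ e.1 = b' ∨ e.2 = c ∨ e.2 = c')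
      = k1 • ({(b, c)} : Multiset (β × γ)) + k2 • {(b, c')} + k3 • {(b', c)} + k4 • {(b', c')}

section Auxiliary
open Finset
set_option linter.unusedSectionVars false

section Chains
variable {ι : Type*} [Fintype ι] [DecidableEq ι]

/-- The boundary of a chain with coefficients modulo 2. -/
def bdry (z : Finset ι → ZMod 2) (τ : Finset ι) : ZMod 2 :=
  ∑ v ∈ τᶜ, z (insert v τ)

/-- The cone with apex `x` over a chain. -/
def cone (x : ι) (u : Finset ι → ZMod 2) (τ : Finset ι) : ZMod 2 :=
  if x ∈ τ then u (τ.erase x) else 0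

/-- The part of a chain carried by the faces avoiding `v`. -/
def avoid (v : ι) (z : Finset ι → ZMod 2) (τ : Finset ι) : ZMod 2 :=
  if v ∈ τ then 0 else z τ

/-- The part of a chain in the link of `v`. -/
def linkPart (v : ι) (z : Finset ι → ZMod 2) (τ : Finset ι) : ZMod 2 :=
  if v ∈ τ then 0 else z (insert v τ)

/-- The chain `z` is supported on independent `j`-subsets of `E`. -/
def SuppOn (R : ι → ι → Prop) (E : Finset ι) (j : ℕ) (z : Finset ι → ZMod 2) : Prop :=
  ∀ τ, z τ ≠ 0 → τ ⊆ E ∧ (∀ e ∈ τ, ∀ f ∈ τ, e ≠ f → ¬ R e f) ∧ τ.card = j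

/-- The independence complex of `R` on `E` has no reduced homology modulo 2 carried by
faces with at most `k` vertices. -/
def Acyc (R : ι → ι → Prop) (k : ℕ) (E : Finset ι) : Prop :=
  ∀ j < k, ∀ z, SuppOn R E j z → bdry z = 0 → ∃ w, SuppOn R E (j + 1) w ∧ bdry w = z

lemma chain_add_self (z : Finset ι → ZMod 2) : z + z = 0 := by
  funext τ
  exact CharTwo.add_self_eq_zero (z τ)

lemma bdry_add (z w : Finset ι → ZMod 2) : bdry (z + w) = bdry z + bdry w := by
  funext τ
  simp [bdry, sum_add_distrib]

lemma bdry_zero : bdry (0 : Finset ι → ZMod 2) = 0 := by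
  funext τ
  simp [bdry]

lemma bdry_apply_eq_zero {v : ι} {u : Finset ι → ZMod 2} (hu : ∀ τ, v ∈ τ → u τ = 0)
    {τ : Finset ι} (hv : v ∈ τ) : bdry u τ = 0 :=
  sum_eq_zero fun _ _ => hu _ (mem_insert_of_mem hv)

lemma bdry_cone {x : ι} {u : Finset ι → ZMod 2} (hu : ∀ τ, x ∈ τ → u τ = 0) :
    bdry (cone x u) = u + cone x (bdry u) := by
  funext τ
  by_cases hx : x ∈ τ
  · have h1 : (τ.erase x)ᶜ = insert x τᶜ := by ext y; grind [mem_compl]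
    have h2 : bdry u (τ.erase x) = ∑ v ∈ τᶜ, u (insert v (τ.erase x)) := by
      rw [bdry, h1, sum_insert (by simpa using hx), insert_erase hx, hu τ hx, zero_add]
    simp only [Pi.add_apply, cone, hx, if_true, h2, hu τ hx, zero_add]
    rw [bdry]
    refine sum_congr rfl fun v hv => ?_
    have hvx : v ≠ x := by rintro rfl; simp [hx] at hv
    rw [cone, if_pos (mem_insert_of_mem hx), erase_insert_of_ne hvx]
  · simp only [Pi.add_apply, cone, hx, if_false, add_zero, bdry]
    rw [sum_eq_single x]
    · simp [hx]
    · intro v _ hvx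
      rw [if_neg]
      simp [hx, hvx.symm]
    · simp [hx]

lemma avoid_add_cone_linkPart (v : ι) (z : Finset ι → ZMod 2) :
    avoid v z + cone v (linkPart v z) = z := by
  funext τ
  by_cases hv : v ∈ τ <;> simp [avoid, cone, linkPart, hv, insert_erase]

lemma bdry_linkPart {z : Finset ι → ZMod 2} (hz : bdry z = 0) (v : ι) :
    bdry (linkPart v z) = 0 := by
  have hu : ∀ τ, v ∈ τ → linkPart v z τ = 0 := fun τ h => by simp [linkPart, h]
  have ha : ∀ τ, v ∈ τ → avoid v z τ = 0 := fun τ h => by simp [avoid, h]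
  funext τ
  by_cases hv : v ∈ τ
  · exact bdry_apply_eq_zero hu hv
  · have h := congrFun hz (insert v τ)
    rw [← avoid_add_cone_linkPart v z, bdry_add, bdry_cone hu] at h
    simpa [bdry_apply_eq_zero ha, hu, cone, hv] using h

lemma bdry_avoid {z : Finset ι → ZMod 2} (hz : bdry z = 0) (v : ι) :
    bdry (avoid v z) = linkPart v z := by
  have hu : ∀ τ, v ∈ τ → linkPart v z τ = 0 := fun τ h => by simp [linkPart, h]
  have h := hz
  rw [← avoid_add_cone_linkPart v z, bdry_add, bdry_cone hu, bdry_linkPart hz] at h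
  have h0 : cone v (0 : Finset ι → ZMod 2) = 0 := by funext τ; simp [cone]
  rw [h0, add_zero] at h
  calc bdry (avoid v z) = bdry (avoid v z) + (linkPart v z + linkPart v z) := by
        rw [chain_add_self, add_zero]
    _ = linkPart v z := by rw [← add_assoc, h, zero_add]

lemma SuppOn.add {R : ι → ι → Prop} {E : Finset ι} {j : ℕ} {z w : Finset ι → ZMod 2}
    (hz : SuppOn R E j z) (hw : SuppOn R E j w) : SuppOn R E j (z + w) := by
  intro τ h
  by_cases h1 : z τ = 0
  · exact hw τ fun h2 => h (by simp [h1, h2])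
  · exact hz τ h1

lemma SuppOn.mono {R : ι → ι → Prop} {E E' : Finset ι} {j : ℕ} {z : Finset ι → ZMod 2}
    (hz : SuppOn R E j z) (h : E ⊆ E') : SuppOn R E' j z :=
  fun τ hτ => ⟨(hz τ hτ).1.trans h, (hz τ hτ).2⟩

lemma suppOn_zero (R : ι → ι → Prop) (E : Finset ι) (j : ℕ) : SuppOn R E j 0 :=
  fun _ h => absurd rfl h

lemma SuppOn.avoid {R : ι → ι → Prop} {E : Finset ι} {j : ℕ} {z : Finset ι → ZMod 2}
    (hz : SuppOn R E j z) (v : ι) : SuppOn R (E.erase v) j (avoid v z) := by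
  intro τ h
  by_cases hv : v ∈ τ
  · simp [Tripartite.avoid, hv] at h
  · simp only [Tripartite.avoid, hv, if_false] at h
    exact ⟨subset_erase.2 ⟨(hz τ h).1, hv⟩, (hz τ h).2⟩

lemma SuppOn.cone {R : ι → ι → Prop} (hR : ∀ e f, R e f → R f e) {E L : Finset ι} {j : ℕ}
    {w : Finset ι → ZMod 2} {v : ι} (hv : v ∈ E) (hL : ∀ e ∈ L, e ∈ E ∧ ¬ R v e)
    (hw : SuppOn R L j w) : SuppOn R E (j + 1) (cone v w) := by
  intro τ h
  by_cases hvτ : v ∈ τ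
  · simp only [Tripartite.cone, hvτ, if_true] at h
    obtain ⟨h1, h2, h3⟩ := hw _ h
    refine ⟨fun e he => ?_, fun e he f hf hef => ?_, ?_⟩
    · by_cases hev : e = v
      · rwa [hev]
      · exact (hL e (h1 (mem_erase.2 ⟨hev, he⟩))).1
    · by_cases hev : e = v
      · subst hev
        exact (hL f (h1 (mem_erase.2 ⟨hef.symm, hf⟩))).2
      · by_cases hfv : f = v
        · subst hfv
          exact fun h => (hL e (h1 (mem_erase.2 ⟨hev, he⟩))).2 (hR _ _ h)
        · exact h2 e (mem_erase.2 ⟨hev, he⟩) f (mem_erase.2 ⟨hfv, hf⟩) hef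
    · rw [← h3, card_erase_add_one hvτ]
  · simp [Tripartite.cone, hvτ] at h

lemma SuppOn.linkPart {R : ι → ι → Prop} {E L : Finset ι} {j : ℕ}
    {z : Finset ι → ZMod 2} {v : ι} (hL : ∀ e ∈ E, e ≠ v → ¬ R v e → e ∈ L)
    (hz : SuppOn R E (j + 1) z) : SuppOn R L j (linkPart v z) := by
  intro τ h
  by_cases hv : v ∈ τ
  · simp [Tripartite.linkPart, hv] at h
  · simp only [Tripartite.linkPart, hv, if_false] at h
    obtain ⟨h1, h2, h3⟩ := hz _ h
    refine ⟨fun e he => ?_, fun e he f hf => ?_, ?_⟩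
    · have hev : e ≠ v := by rintro rfl; exact hv he
      exact hL e (h1 (mem_insert_of_mem he)) hev
        (h2 v (mem_insert_self _ _) e (mem_insert_of_mem he) hev.symm)
    · exact h2 e (mem_insert_of_mem he) f (mem_insert_of_mem hf)
    · rw [card_insert_of_notMem hv] at h3; omega

lemma acyc_zero (R : ι → ι → Prop) (E : Finset ι) : Acyc R 0 E := fun _ h => absurd h (by simp)

lemma Acyc.mono {R : ι → ι → Prop} {E : Finset ι} {k l : ℕ} (h : Acyc R k E) (hl : l ≤ k) :
    Acyc R l E := fun j hj => h j (hj.trans_le hl)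

/-- Deleting a vertex and passing to its link. -/
lemma acyc_of_erase_of_link {R : ι → ι → Prop} (hR : ∀ e f, R e f → R f e) (hrefl : ∀ e, R e e)
    {E L : Finset ι} {k : ℕ} {v : ι} (hv : v ∈ E) (hL : ∀ e, e ∈ L ↔ e ∈ E ∧ ¬ R v e)
    (h1 : Acyc R (k + 1) (E.erase v)) (h2 : Acyc R k L) : Acyc R (k + 1) E := by
  intro j hj z hz hbz
  obtain ⟨w, hw, hbw⟩ : ∃ w, SuppOn R L j w ∧ bdry w = linkPart v z := by
    rcases j with _ | j
    · refine ⟨0, suppOn_zero _ _ _, ?_⟩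
      rw [bdry_zero]
      funext τ
      by_contra h
      by_cases hvτ : v ∈ τ
      · simp [linkPart, hvτ] at h
      · simp only [linkPart, hvτ, if_false] at h
        have := (hz _ (Ne.symm h)).2.2
        simp at this
    · exact h2 j (by omega) _ (hz.linkPart fun e he _ h => (hL e).2 ⟨he, h⟩) (bdry_linkPart hbz v)
  have hvL : v ∉ L := fun h => ((hL v).1 h).2 (hrefl v)
  have hLE : L ⊆ E.erase v := fun e he => mem_erase.2
    ⟨by rintro rfl; exact hvL he, ((hL e).1 he).1⟩
  obtain ⟨y, hy, hby⟩ := h1 j hj (avoid v z + w) ((hz.avoid v).add (hw.mono hLE)) (by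
    rw [bdry_add, bdry_avoid hbz, hbw, chain_add_self])
  refine ⟨y + cone v w, (hy.mono (erase_subset _ _)).add
    (hw.cone hR hv fun e he => (hL e).1 he), ?_⟩
  have hwv : ∀ τ, v ∈ τ → w τ = 0 := fun τ hτ => by
    by_contra h
    exact hvL ((hw τ h).1 hτ)
  rw [bdry_add, hby, bdry_cone hwv, hbw, add_assoc, ← add_assoc w, chain_add_self, zero_add,
    avoid_add_cone_linkPart]

/-- An isolated vertex makes the independence complex a cone. -/
lemma acyc_of_isolated {R : ι → ι → Prop} (hR : ∀ e f, R e f → R f e) {E : Finset ι} {v : ι}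
    (hv : v ∈ E) (h : ∀ e ∈ E, e ≠ v → ¬ R v e) (k : ℕ) : Acyc R k E := by
  intro j _ z hz hbz
  refine ⟨cone v (avoid v z), (hz.avoid v).cone hR hv fun e he =>
    ⟨mem_of_mem_erase he, h e (mem_of_mem_erase he) (ne_of_mem_erase he)⟩, ?_⟩
  rw [bdry_cone (fun τ hτ => by simp [avoid, hτ]), bdry_avoid hbz, avoid_add_cone_linkPart]

/-- Deleting a set of pairwise adjacent vertices, each with a sufficiently connected link. -/
lemma acyc_of_sdiff_clique {R : ι → ι → Prop} (hR : ∀ e f, R e f → R f e) (hrefl : ∀ e, R e e)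
    {k : ℕ} (L : ι → Finset ι) (F : Finset ι) : ∀ E : Finset ι, F ⊆ E →
    (∀ f ∈ F, ∀ g ∈ F, R f g) → (∀ f ∈ F, ∀ e, e ∈ L f ↔ e ∈ E ∧ ¬ R f e) →
    (∀ f ∈ F, Acyc R k (L f)) → Acyc R (k + 1) (E \ F) → Acyc R (k + 1) E := by
  induction F using Finset.induction_on with
  | empty => intro E _ _ _ _ h; simpa using h
  | insert f F hf ih =>
    intro E hFE hcl hL hA h
    have hfE : f ∈ E := hFE (mem_insert_self _ _)
    refine acyc_of_erase_of_link hR hrefl hfE (hL f (mem_insert_self _ _)) ?_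
      (hA f (mem_insert_self _ _))
    refine ih (E.erase f) ?_ (fun g hg g' hg' => hcl g (mem_insert_of_mem hg) g'
      (mem_insert_of_mem hg')) (fun g hg e => ?_) (fun g hg => hA g (mem_insert_of_mem hg)) ?_
    · exact subset_erase.2 ⟨(subset_insert _ _).trans hFE, hf⟩
    · rw [hL g (mem_insert_of_mem hg) e, mem_erase]
      constructor
      · rintro ⟨h1, h2⟩
        refine ⟨⟨?_, h1⟩, h2⟩
        rintro rfl
        exact h2 (hcl g (mem_insert_of_mem hg) e (mem_insert_self _ _))
      · rintro ⟨⟨_, h1⟩, h2⟩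
        exact ⟨h1, h2⟩
    · convert h using 1
      ext e
      simp [mem_sdiff]
      tauto

end Chains

section AuxiliaryHall
variable {ι α : Type*} [Fintype ι] [DecidableEq ι] [DecidableEq α]

lemma bdry_sum {κ : Type*} (s : Finset κ) (f : κ → Finset ι → ZMod 2) :
    bdry (∑ x ∈ s, f x) = ∑ x ∈ s, bdry (f x) := by
  funext τ
  simp only [bdry, Finset.sum_apply]
  exact sum_comm

lemma sum_erase_erase_eq_zero (f : Finset α → Finset ι → ZMod 2) (σ : Finset α) :
    ∑ x ∈ σ, ∑ y ∈ σ.erase x, f ((σ.erase x).erase y) = 0 := by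
  rw [sum_sigma']
  refine sum_involution (fun p _ => ⟨p.2, p.1⟩) ?_ ?_ ?_ ?_
  · rintro ⟨x, y⟩ _
    simp only
    rw [erase_right_comm, chain_add_self]
  · rintro ⟨x, y⟩ h _ h'
    simp only [mem_sigma, mem_erase] at h
    simp only [Sigma.mk.injEq] at h'
    exact h.2.1 h'.1
  · rintro ⟨x, y⟩ h
    simp only [mem_sigma, mem_erase] at h ⊢
    exact ⟨h.2.2, Ne.symm h.2.1, h.1⟩
  · rintro ⟨x, y⟩ _
    rfl

lemma SuppOn.sum {κ : Type*} {R : ι → ι → Prop} {E : Finset ι} {j : ℕ} (s : Finset κ)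
    (f : κ → Finset ι → ZMod 2) (h : ∀ x ∈ s, SuppOn R E j (f x)) :
    SuppOn R E j (∑ x ∈ s, f x) := by
  intro τ hτ
  rw [Finset.sum_apply] at hτ
  obtain ⟨x, hx, hx'⟩ := exists_ne_zero_of_sum_ne_zero hτ
  exact h x hx τ hx'

/-- A family of chains filling the simplex on `α`. -/
lemma exists_filling {R : ι → ι → Prop} {a : ι → α}
    (h : ∀ S : Finset α, Acyc R S.card (univ.filter fun e => a e ∈ S)) (m : ℕ) :
    ∃ f : Finset α → Finset ι → ZMod 2, f ∅ = Pi.single ∅ 1 ∧ ∀ σ, σ.card ≤ m →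
      SuppOn R (univ.filter fun e => a e ∈ σ) σ.card (f σ) ∧
      bdry (f σ) = ∑ x ∈ σ, f (σ.erase x) := by
  induction m with
  | zero =>
    refine ⟨fun _ => Pi.single ∅ 1, rfl, fun σ hσ => ?_⟩
    obtain rfl : σ = ∅ := card_eq_zero.1 (by omega)
    constructor
    · intro τ hτ
      obtain rfl : τ = ∅ := by
        by_contra h'
        exact hτ (Pi.single_eq_of_ne h' _)
      simp
    · funext τ
      simp only [bdry, sum_empty, Pi.zero_apply]
      exact sum_eq_zero fun v _ => Pi.single_eq_of_ne (insert_ne_empty v τ) _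
  | succ m ih =>
    obtain ⟨f, hf0, hf⟩ := ih
    have key : ∀ σ : Finset α, σ.card = m + 1 → ∃ w,
        SuppOn R (univ.filter fun e => a e ∈ σ) σ.card w ∧
        bdry w = ∑ x ∈ σ, f (σ.erase x) := by
      intro σ hσ
      have hc : ∀ x ∈ σ, (σ.erase x).card = m := fun x hx => by
        rw [card_erase_of_mem hx]; omega
      rw [hσ]
      refine h σ m (by omega) _ (SuppOn.sum _ _ fun x hx => ?_) ?_
      · have := (hf (σ.erase x) (hc x hx).le).1
        rw [hc x hx] at this
        exact this.mono fun e he => by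
          simp only [mem_filter, mem_erase] at he ⊢
          exact ⟨he.1, he.2.2⟩
      · rw [bdry_sum, ← sum_erase_erase_eq_zero f σ]
        exact sum_congr rfl fun x hx => (hf _ (hc x hx).le).2
    choose! g hg using key
    have hsame : ∀ σ : Finset α, σ.card ≤ m →
        (if σ.card = m + 1 then g σ else f σ) = f σ := fun σ hσ => if_neg (by omega)
    refine ⟨fun σ => if σ.card = m + 1 then g σ else f σ, by simpa using hf0, fun σ hσ => ?_⟩
    have herase : ∑ x ∈ σ, (if (σ.erase x).card = m + 1 then g (σ.erase x) else f (σ.erase x))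
        = ∑ x ∈ σ, f (σ.erase x) := sum_congr rfl fun x hx => hsame _ (by
          rw [card_erase_of_mem hx]; omega)
    simp only
    rw [herase]
    by_cases h1 : σ.card = m + 1
    · rw [if_pos h1]
      exact hg σ h1
    · rw [if_neg h1]
      exact hf σ (by omega)

/-- The number of ways to drop an element of `τ` so that the colours left are `σ.erase x`. -/
lemma card_drop_colour {a : ι → α} {σ : Finset α} {x : α} (hx : x ∈ σ) {τ : Finset ι}
    (hτ : τ.card = σ.card) (hsub : τ.image a ⊆ σ) :
    (((τ.filter fun v => (τ.erase v).image a = σ.erase x).card : ℕ) : ZMod 2)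
      = if τ.image a = σ then 1 else 0 := by
  by_cases him : τ.image a = σ
  · rw [if_pos him]
    have hinj : Set.InjOn a τ := card_image_iff.1 (by rw [him, hτ])
    obtain ⟨v, hv, hvx⟩ := mem_image.1 (him ▸ hx : x ∈ τ.image a)
    have : τ.filter (fun v => (τ.erase v).image a = σ.erase x) = {v} := by
      ext w
      simp only [mem_filter, mem_singleton]
      constructor
      · rintro ⟨hw, h⟩
        by_contra hne
        have : x ∈ (τ.erase w).image a :=
          mem_image.2 ⟨v, mem_erase.2 ⟨fun h => hne h.symm, hv⟩, hvx⟩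
        rw [h] at this
        simp at this
      · rintro rfl
        refine ⟨hv, ?_⟩
        ext y
        rw [← him, mem_image, mem_erase, mem_image]
        constructor
        · rintro ⟨u, hu, rfl⟩
          obtain ⟨hu1, hu2⟩ := mem_erase.1 hu
          exact ⟨fun h => hu1 (hinj hu2 hv (h.trans hvx.symm)), u, hu2, rfl⟩
        · rintro ⟨hy, u, hu, rfl⟩
          exact ⟨u, mem_erase.2 ⟨fun h => hy (h ▸ hvx), hu⟩, rfl⟩
    rw [this]
    simp
  · rw [if_neg him]
    by_cases hem : τ.filter (fun v => (τ.erase v).image a = σ.erase x) = ∅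
    · rw [hem]; simp
    · obtain ⟨v, hv⟩ := nonempty_iff_ne_empty.2 hem
      obtain ⟨hv, hvim⟩ := mem_filter.1 hv
      have hins : τ.image a = insert (a v) (σ.erase x) := by
        rw [← hvim, ← image_insert, insert_erase hv]
      have hav : a v ∈ σ.erase x := by
        refine mem_erase.2 ⟨fun h => him ?_, hsub (mem_image_of_mem a hv)⟩
        rw [hins, h, insert_erase hx]
      have hinj : Set.InjOn a (τ.erase v) := card_image_iff.1 (by
        rw [hvim, card_erase_of_mem hx, card_erase_of_mem hv, hτ])
      obtain ⟨w, hw, hwv⟩ := mem_image.1 (hvim ▸ hav : a v ∈ (τ.erase v).image a)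
      obtain ⟨hwne, hwτ⟩ := mem_erase.1 hw
      have : τ.filter (fun v => (τ.erase v).image a = σ.erase x) = {v, w} := by
        ext u
        simp only [mem_filter, mem_insert, mem_singleton]
        constructor
        · rintro ⟨hu, h⟩
          by_contra! hne
          have hau : a u ∈ (τ.erase u).image a := by
            rw [h, ← hvim]
            exact mem_image_of_mem a (mem_erase.2 ⟨hne.1, hu⟩)
          obtain ⟨t, ht, htu⟩ := mem_image.1 hau
          obtain ⟨ht1, ht2⟩ := mem_erase.1 ht
          by_cases htv : t = v
          · subst htv
            exact hne.2 (hinj (by simp [hne.1, hu]) (mem_coe.2 hw) (htu.symm.trans hwv.symm))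
          · exact ht1 (hinj (by simp [htv, ht2]) (by simp [hne.1, hu]) htu)
        · rintro (rfl | rfl)
          · exact ⟨hv, hvim⟩
          · refine ⟨hwτ, ?_⟩
            rw [← hvim]
            ext y
            simp only [mem_image, mem_erase]
            constructor
            · rintro ⟨t, ⟨ht1, ht2⟩, rfl⟩
              by_cases htv : t = v
              · exact ⟨u, ⟨hwne, hwτ⟩, by rw [hwv, htv]⟩
              · exact ⟨t, ⟨htv, ht2⟩, rfl⟩
            · rintro ⟨t, ⟨ht1, ht2⟩, rfl⟩
              by_cases htu : t = u
              · exact ⟨v, ⟨hwne.symm, hv⟩, by rw [← hwv, htu]⟩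
              · exact ⟨t, ⟨htu, ht2⟩, rfl⟩
      rw [this, card_pair hwne.symm]
      rfl

lemma sum_bdry_weight (z : Finset ι → ZMod 2) (W : Finset ι → ZMod 2) :
    ∑ ρ, W ρ * bdry z ρ = ∑ τ, (∑ v ∈ τ, W (τ.erase v)) * z τ := by
  simp only [bdry, mul_sum, sum_mul]
  rw [sum_sigma', sum_sigma']
  refine sum_bij' (fun p _ => ⟨insert p.2 p.1, p.2⟩) (fun p _ => ⟨p.1.erase p.2, p.2⟩) ?_ ?_ ?_ ?_ ?_
  · rintro ⟨ρ, v⟩ h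
    simp
  · rintro ⟨τ, v⟩ h
    simp
  · rintro ⟨ρ, v⟩ h
    simp at h
    simp [erase_insert h]
  · rintro ⟨τ, v⟩ h
    simp at h
    simp [insert_erase h]
  · rintro ⟨ρ, v⟩ h
    simp at h
    simp [erase_insert h]

/-- The topological version of Hall's theorem for independent transversals. -/
theorem exists_independent_transversal [Fintype α] {R : ι → ι → Prop} {a : ι → α}
    (h : ∀ S : Finset α, Acyc R S.card (univ.filter fun e => a e ∈ S)) :
    ∃ τ : Finset ι, (∀ e ∈ τ, ∀ f ∈ τ, e ≠ f → ¬ R e f) ∧ τ.image a = univ ∧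
      τ.card = Fintype.card α := by
  obtain ⟨f, hf0, hf⟩ := exists_filling h (Fintype.card α)
  replace hf := fun σ => hf σ (card_le_univ σ)
  have key : ∀ σ : Finset α, ∑ τ, (if τ.image a = σ then 1 else 0) * f σ τ = 1 := by
    intro σ
    induction hm : σ.card generalizing σ with
    | zero =>
      obtain rfl : σ = ∅ := card_eq_zero.1 hm
      simp [hf0]
    | succ m ih =>
      obtain ⟨x, hx⟩ : σ.Nonempty := card_pos.1 (by omega)
      have h1 : ∑ ρ, (if ρ.image a = σ.erase x then 1 else 0) * bdry (f σ) ρ = 1 := by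
        rw [(hf σ).2]
        simp only [Finset.sum_apply, mul_sum]
        rw [sum_comm, sum_eq_single x]
        · exact ih _ (by rw [card_erase_of_mem hx]; omega)
        · intro y hy hyx
          refine sum_eq_zero fun ρ _ => ?_
          by_contra hne
          have hρ := left_ne_zero_of_mul hne
          have hρ' := ((hf (σ.erase y)).1 ρ (right_ne_zero_of_mul hne)).1
          have him : ρ.image a = σ.erase x := by
            by_contra h'
            simp [h'] at hρ
          obtain ⟨e, he, hey⟩ := mem_image.1 (him ▸ mem_erase.2 ⟨hyx, hy⟩ : y ∈ ρ.image a)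
          have := hρ' he
          simp [hey] at this
        · exact fun h' => absurd hx h'
      refine Eq.trans ?_ h1
      rw [sum_bdry_weight]
      refine sum_congr rfl fun τ _ => ?_
      by_cases hz : f σ τ = 0
      · simp [hz]
      · obtain ⟨hτ1, -, hτ2⟩ := (hf σ).1 τ hz
        congr 1
        rw [← card_drop_colour hx hτ2 (image_subset_iff.2 fun e he => (mem_filter.1 (hτ1 he)).2),
          card_filter]
        push_cast
        rfl
  obtain ⟨τ, -, hτ⟩ := exists_ne_zero_of_sum_ne_zero
    (by rw [key univ]; exact one_ne_zero :
      ∑ τ, (if τ.image a = univ then 1 else 0) * f univ τ ≠ 0)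
  obtain ⟨-, h2, h3⟩ := (hf univ).1 τ (right_ne_zero_of_mul hτ)
  refine ⟨τ, h2, ?_, by rw [h3, card_univ]⟩
  by_contra h'
  simp [h'] at hτ

end AuxiliaryHall

section Deficiency
variable {ι κ α : Type*} [Fintype ι] [DecidableEq ι] [Fintype κ] [DecidableEq κ] [DecidableEq α]

/-- The chain pushed forward along an embedding of vertex sets. -/
def pushChain (g : ι ↪ κ) (w : Finset ι → ZMod 2) (σ : Finset κ) : ZMod 2 :=
  ∑ τ, if τ.map g = σ then w τ else 0

lemma pushChain_map (g : ι ↪ κ) (w : Finset ι → ZMod 2) (τ : Finset ι) :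
    pushChain g w (τ.map g) = w τ := by
  rw [pushChain, sum_eq_single τ]
  · simp
  · intro τ' _ h
    rw [if_neg]
    simpa using h
  · simp

lemma pushChain_eq_zero (g : ι ↪ κ) (w : Finset ι → ZMod 2) {σ : Finset κ}
    (h : ∀ τ : Finset ι, τ.map g ≠ σ) : pushChain g w σ = 0 :=
  sum_eq_zero fun τ _ => if_neg (h τ)

lemma exists_map_of_subset_range (g : ι ↪ κ) {σ : Finset κ} (h : ∀ e ∈ σ, ∃ x, g x = e) :
    ∃ τ : Finset ι, τ.map g = σ := by
  refine ⟨univ.filter fun x => g x ∈ σ, ?_⟩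
  ext e
  simp only [mem_map, mem_filter, mem_univ, true_and]
  constructor
  · rintro ⟨x, hx, rfl⟩
    exact hx
  · intro he
    obtain ⟨x, rfl⟩ := h e he
    exact ⟨x, he, rfl⟩

lemma bdry_pushChain (g : ι ↪ κ) (w : Finset ι → ZMod 2) :
    bdry (pushChain g w) = pushChain g (bdry w) := by
  funext σ
  by_cases h : ∃ τ : Finset ι, τ.map g = σ
  · obtain ⟨τ, rfl⟩ := h
    rw [pushChain_map, bdry, bdry]
    have h1 : ∑ v ∈ τᶜ, w (insert v τ) = ∑ v ∈ (τᶜ).map g, pushChain g w (insert v (τ.map g)) := by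
      rw [sum_map]
      refine sum_congr rfl fun v _ => ?_
      rw [← map_insert, pushChain_map]
    rw [h1]
    symm
    refine sum_subset (fun v hv => ?_) fun v hv hv' => ?_
    · obtain ⟨x, hx, rfl⟩ := mem_map.1 hv
      simpa using hx
    · refine pushChain_eq_zero g w fun τ' hτ' => ?_
      have : v ∈ τ'.map g := hτ' ▸ mem_insert_self _ _
      obtain ⟨x, -, rfl⟩ := mem_map.1 this
      simp at hv hv'
      exact hv hv'
  · push Not at h
    rw [pushChain_eq_zero g _ h]
    refine sum_eq_zero fun v _ => pushChain_eq_zero g w fun τ' hτ' => ?_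
    obtain ⟨τ, hτ⟩ := exists_map_of_subset_range g (σ := σ) fun e he => by
      have : e ∈ τ'.map g := hτ' ▸ mem_insert_of_mem he
      obtain ⟨x, -, hx⟩ := mem_map.1 this
      exact ⟨x, hx⟩
    exact h τ hτ

lemma Acyc.map {R : ι → ι → Prop} {R' : κ → κ → Prop} (g : ι ↪ κ)
    (hR : ∀ e f, R' (g e) (g f) ↔ R e f) {k : ℕ} {E : Finset ι} (h : Acyc R k E) :
    Acyc R' k (E.map g) := by
  intro j hj z hz hbz
  have hpush : pushChain g (fun τ => z (τ.map g)) = z := by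
    funext σ
    by_cases hσ : ∃ τ : Finset ι, τ.map g = σ
    · obtain ⟨τ, rfl⟩ := hσ
      rw [pushChain_map]
    · push Not at hσ
      rw [pushChain_eq_zero g _ hσ]
      by_contra hne
      obtain ⟨τ, hτ⟩ := exists_map_of_subset_range g (σ := σ) fun e he => by
        obtain ⟨x, -, hx⟩ := mem_map.1 ((hz σ (Ne.symm hne)).1 he)
        exact ⟨x, hx⟩
      exact hσ τ hτ
  obtain ⟨w, hw, hbw⟩ := h j hj (fun τ => z (τ.map g)) (fun τ hτ => by
      obtain ⟨h1, h2, h3⟩ := hz _ hτ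
      refine ⟨by simpa using h1, fun e he f hf hef hr => ?_, by simpa using h3⟩
      exact h2 (g e) (mem_map_of_mem g he) (g f) (mem_map_of_mem g hf)
        (fun h => hef (g.injective h)) ((hR e f).2 hr)) (by
      funext τ
      have := congrFun hbz (τ.map g)
      rw [← hpush, bdry_pushChain, pushChain_map] at this
      exact this)
  refine ⟨pushChain g w, fun σ hσ => ?_, by rw [bdry_pushChain, hbw, hpush]⟩
  by_cases hσ' : ∃ τ : Finset ι, τ.map g = σ
  · obtain ⟨τ, rfl⟩ := hσ'
    rw [pushChain_map] at hσ
    obtain ⟨h1, h2, h3⟩ := hw τ hσ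
    refine ⟨by simpa using h1, ?_, by simpa using h3⟩
    intro e he f hf hef hr
    obtain ⟨x, hx, rfl⟩ := mem_map.1 he
    obtain ⟨y, hy, rfl⟩ := mem_map.1 hf
    exact h2 x hx y hy (fun h => hef (by rw [h])) ((hR x y).1 hr)
  · push Not at hσ'
    exact absurd (pushChain_eq_zero g w hσ') hσ

/-- The relation `R` extended by `d` disjoint cliques of new vertices. -/
def extendRel {d : ℕ} (R : ι → ι → Prop) : ι ⊕ α × Fin d → ι ⊕ α × Fin d → Prop
  | .inl e, .inl f => R e f
  | .inr x, .inr y => x.2 = y.2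
  | _, _ => False

lemma extendRel_symm {d : ℕ} {R : ι → ι → Prop} (hR : ∀ e f, R e f → R f e)
    (e f : ι ⊕ α × Fin d) (h : extendRel R e f) : extendRel R f e := by
  rcases e with e | e <;> rcases f with f | f
  · exact hR _ _ h
  · exact h
  · exact h
  · exact Eq.symm h

lemma extendRel_refl {d : ℕ} {R : ι → ι → Prop} (hR : ∀ e, R e e)
    (e : ι ⊕ α × Fin d) : extendRel R e e := by
  rcases e with e | e
  · exact hR e
  · exact rfl

/-- Restriction to the colours in `S` and to the first `t` new cliques. -/
def extendSet [Fintype α] {d : ℕ} (a : ι → α) (S : Finset α) (t : ℕ) : Finset (ι ⊕ α × Fin d) :=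
  (univ.filter fun e => a e ∈ S).disjSum (univ.filter fun x => x.1 ∈ S ∧ x.2.val < t)

lemma acyc_extendSet [Fintype α] {d : ℕ} {R : ι → ι → Prop} (hR : ∀ e f, R e f → R f e)
    (hrefl : ∀ e, R e e) {a : ι → α} {S : Finset α} (hS : S.Nonempty) {k : ℕ}
    (h : Acyc R k (univ.filter fun e => a e ∈ S)) (t : ℕ) (ht : t ≤ d) :
    Acyc (extendRel (d := d) R) (k + t) (extendSet a S t) := by
  induction t with
  | zero =>
    have := h.map (R' := extendRel (α := α) (d := d) R) Function.Embedding.inl fun e f => Iff.rfl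
    have hset : extendSet (d := d) a S 0
        = (univ.filter fun e => a e ∈ S).map Function.Embedding.inl := by
      ext (e | e) <;> simp [extendSet]
    rw [hset]
    exact this
  | succ t ih =>
    obtain ⟨x, hx⟩ := hS
    have ih := ih (by omega)
    let i : Fin d := ⟨t, by omega⟩
    let v : ι ⊕ α × Fin d := .inr (x, i)
    refine acyc_of_sdiff_clique (k := k + t) (extendRel_symm hR) (extendRel_refl hrefl)
      (fun _ => extendSet a S t) ((extendSet a S (t + 1) \ extendSet a S t).erase v)
      (extendSet a S (t + 1)) ?_ ?_ ?_ (fun _ _ => ih) ?_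
    · exact (erase_subset _ _).trans sdiff_subset
    · rintro (e | ⟨x, j⟩) he (f | ⟨y, j'⟩) hf <;> simp [extendSet] at he hf
      simp only [extendRel]
      apply Fin.ext
      have h1 := he.2.2 he.2.1.1
      have h2 := hf.2.2 hf.2.1.1
      omega
    · rintro (e | ⟨x, j⟩) he <;> simp [extendSet] at he
      have hj := he.2.2 he.2.1.1
      rintro (f | ⟨y, j'⟩)
      · simp [extendSet, extendRel]
      · simp only [extendSet, extendRel, mem_filter, mem_univ, inr_mem_disjSum, true_and, Fin.ext_iff]
        by_cases hy : y ∈ S <;> simp only [hy, true_and, false_and]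
        omega
    · refine acyc_of_isolated (v := v) (extendRel_symm hR) ?_ ?_ _
      · simp [extendSet, v, i, hx]
      · rintro (e | ⟨y, j⟩) he hne
        · simp [extendRel, v]
        · simp only [v, extendRel, i]
          rintro rfl
          simp [extendSet, v, i] at he hne
          grind

/-- The deficiency version of the topological Hall theorem. -/
theorem exists_independent_partial_transversal [Fintype α] {R : ι → ι → Prop}
    (hR : ∀ e f, R e f → R f e) (hrefl : ∀ e, R e e) {a : ι → α} (d : ℕ)
    (h : ∀ S : Finset α, Acyc R (S.card - d) (univ.filter fun e => a e ∈ S)) :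
    ∃ τ : Finset ι, (∀ e ∈ τ, ∀ f ∈ τ, e ≠ f → ¬ R e f) ∧ Set.InjOn a τ ∧
      Fintype.card α ≤ τ.card + d := by
  obtain ⟨τ, h1, h2, h3⟩ := exists_independent_transversal (R := extendRel (α := α) (d := d) R)
    (a := Sum.elim a Prod.fst) (fun S => by
      rcases S.eq_empty_or_nonempty with rfl | hS
      · exact acyc_zero _ _
      · have := (acyc_extendSet hR hrefl hS (h S) d le_rfl).mono (l := S.card) (by omega)
        convert this using 1
        ext (e | e) <;> simp [extendSet])
  have hinj : Set.InjOn (Sum.elim a Prod.fst) (τ : Set (ι ⊕ α × Fin d)) :=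
    card_image_iff.1 (by rw [h2, h3, card_univ])
  refine ⟨τ.toLeft, fun e he f hf hef hr => ?_, fun e he f hf hef => ?_, ?_⟩
  · exact h1 (.inl e) (mem_toLeft.1 he) (.inl f) (mem_toLeft.1 hf) (by simpa using hef) hr
  · have := @hinj (.inl e) (by simpa using he) (.inl f) (by simpa using hf) hef
    simpa using this
  · rw [← h3, ← card_toLeft_add_card_toRight]
    have : τ.toRight.card ≤ d := by
      refine (card_le_card_of_injOn Prod.snd (fun _ _ => mem_coe.2 (mem_univ _)) fun e he f hf hef => ?_).trans_eq (card_fin d)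
      by_contra hne
      exact h1 (.inr e) (by simpa using he) (.inr f) (by simpa using hf) (by simpa using hne) hef
    omega

end Deficiency

section Bipartite
variable {ι β γ : Type*} [Fintype ι] [DecidableEq ι] [DecidableEq β] [DecidableEq γ]

/-- Two edges of a bipartite multigraph, with end maps `p` and `q`, share an end. -/
def Meets (p : ι → β) (q : ι → γ) (e f : ι) : Prop := p e = p f ∨ q e = q f

/-- The edges of `E` avoiding the vertices in `S` and `T`. -/
def del (p : ι → β) (q : ι → γ) (E : Finset ι) (S : Finset β) (T : Finset γ) : Finset ι :=
  E.filter fun e => p e ∉ S ∧ q e ∉ T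

/-- All degrees on the side of `p` are at most `r`. -/
def DegLE (p : ι → β) (r : ℕ) (E : Finset ι) : Prop := ∀ b, (E.filter fun e => p e = b).card ≤ r

/-- The set of edges `M` is a matching. -/
def IsM (p : ι → β) (q : ι → γ) (M : Finset ι) : Prop := DegLE p 1 M ∧ DegLE q 1 M

lemma meets_swap (p : ι → β) (q : ι → γ) : Meets p q = Meets q p := by
  funext e f
  exact propext or_comm

lemma meets_symm (p : ι → β) (q : ι → γ) (e f : ι) (h : Meets p q e f) : Meets p q f e :=
  h.imp Eq.symm Eq.symm

lemma meets_refl (p : ι → β) (q : ι → γ) (e : ι) : Meets p q e e := Or.inl rfl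

lemma del_swap (p : ι → β) (q : ι → γ) (E : Finset ι) (S : Finset β) (T : Finset γ) :
    del q p E T S = del p q E S T := by
  ext e
  simp [del, and_comm]

lemma mem_del {p : ι → β} {q : ι → γ} {E : Finset ι} {S : Finset β} {T : Finset γ} {e : ι} :
    e ∈ del p q E S T ↔ e ∈ E ∧ p e ∉ S ∧ q e ∉ T := mem_filter

lemma del_subset (p : ι → β) (q : ι → γ) (E : Finset ι) (S : Finset β) (T : Finset γ) :
    del p q E S T ⊆ E := filter_subset _ _

lemma del_del (p : ι → β) (q : ι → γ) (E : Finset ι) (S S' : Finset β) (T T' : Finset γ) :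
    del p q (del p q E S T) S' T' = del p q E (S ∪ S') (T ∪ T') := by
  ext e
  simp only [mem_del, mem_union]
  tauto

lemma DegLE.mono {p : ι → β} {r : ℕ} {E E' : Finset ι} (h : DegLE p r E) (hs : E' ⊆ E) :
    DegLE p r E' := fun b => (card_le_card (filter_subset_filter _ hs)).trans (h b)

lemma IsM.mono {p : ι → β} {q : ι → γ} {M M' : Finset ι} (h : IsM p q M) (hs : M' ⊆ M) :
    IsM p q M' := ⟨h.1.mono hs, h.2.mono hs⟩

lemma degLE_one_iff {p : ι → β} {M : Finset ι} :
    DegLE p 1 M ↔ ∀ e ∈ M, ∀ f ∈ M, p e = p f → e = f := by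
  constructor
  · intro h e he f hf hef
    exact card_le_one.1 (h (p f)) e (by simp [he, hef]) f (by simp [hf])
  · intro h b
    refine card_le_one.2 fun e he f hf => ?_
    simp only [mem_filter] at he hf
    exact h e he.1 f hf.1 (he.2.trans hf.2.symm)

lemma DegLE.union_of_disjoint {p : ι → β} {M M' : Finset ι} (h : DegLE p 1 M) (h' : DegLE p 1 M')
    (hd : ∀ e ∈ M, ∀ f ∈ M', p e ≠ p f) : DegLE p 1 (M ∪ M') := by
  rw [degLE_one_iff] at h h' ⊢
  intro e he f hf hef
  rcases mem_union.1 he with he | he <;> rcases mem_union.1 hf with hf | hf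
  · exact h e he f hf hef
  · exact absurd hef (hd e he f hf)
  · exact absurd hef.symm (hd f hf e he)
  · exact h' e he f hf hef

lemma IsM.union {p : ι → β} {q : ι → γ} {M M' : Finset ι} (h : IsM p q M) (h' : IsM p q M')
    (hp : ∀ e ∈ M, ∀ f ∈ M', p e ≠ p f) (hq : ∀ e ∈ M, ∀ f ∈ M', q e ≠ q f) :
    IsM p q (M ∪ M') ∧ (M ∪ M').card = M.card + M'.card := by
  refine ⟨⟨h.1.union_of_disjoint h'.1 hp, h.2.union_of_disjoint h'.2 hq⟩, ?_⟩
  exact card_union_of_disjoint (disjoint_left.2 fun e he he' => hp e he e he' rfl)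

lemma isM_singleton (p : ι → β) (q : ι → γ) (e : ι) : IsM p q {e} := by
  constructor <;> exact degLE_one_iff.2 (by simp)

lemma IsM.insert {p : ι → β} {q : ι → γ} {M : Finset ι} {e : ι} (h : IsM p q M)
    (hp : ∀ f ∈ M, p f ≠ p e) (hq : ∀ f ∈ M, q f ≠ q e) :
    IsM p q (insert e M) ∧ (insert e M).card = M.card + 1 := by
  have := h.union (isM_singleton p q e) (by simpa using hp) (by simpa using hq)
  rwa [union_comm, ← insert_eq, card_singleton] at this

lemma DegLE.card_filter_mem {p : ι → β} {r : ℕ} {E : Finset ι} (h : DegLE p r E) (S : Finset β) :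
    (E.filter fun e => p e ∈ S).card ≤ r * S.card := by
  refine card_le_mul_card_image_of_maps_to (f := p) (fun e he => (mem_filter.1 he).2) r
    fun b _ => ?_
  exact (card_le_card (filter_subset_filter _ (filter_subset _ _))).trans (h b)

/-- Counting the edges lost by deleting vertices. -/
lemma card_add_le_card_del {p : ι → β} {q : ι → γ} {r : ℕ} {E I : Finset ι} (hp : DegLE p r E)
    (hq : DegLE q r E) (S : Finset β) (T : Finset γ)
    (hI : ∀ e ∈ I, e ∈ E ∧ p e ∈ S ∧ q e ∈ T) :
    E.card + I.card ≤ (del p q E S T).card + r * (S.card + T.card) := by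
  have h1 := hp.card_filter_mem S
  have h2 := hq.card_filter_mem T
  have h3 := card_union_add_card_inter (E.filter fun e => p e ∈ S) (E.filter fun e => q e ∈ T)
  have h4 : I.card ≤ ((E.filter fun e => p e ∈ S) ∩ (E.filter fun e => q e ∈ T)).card :=
    card_le_card fun e he => by
      obtain ⟨h1, h2, h3⟩ := hI e he
      simp [h1, h2, h3]
  have h5 : E.card ≤ (del p q E S T).card +
      ((E.filter fun e => p e ∈ S) ∪ (E.filter fun e => q e ∈ T)).card := by
    refine (card_le_card fun e he => ?_).trans (card_union_le _ _)
    simp only [mem_union, mem_del, mem_filter]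
    tauto
  rw [mul_add]
  omega

/-- The base step: explode the edges at the vertex `q e₀`, except the late ones towards `b`,
then the edges at `p e₀`, then the late edges; finally the edge `e₀` is isolated. -/
lemma acyc_of_star {p : ι → β} {q : ι → γ} {E F : Finset ι} {e₀ : ι} {k : ℕ} (he₀ : e₀ ∈ E) (b : β)
    (hF : ∀ f, f ∈ F ↔ f ∈ E ∧ q f = q e₀ ∧ f ≠ e₀ ∧ p f ≠ b)
    (h0 : ∀ f ∈ F, Acyc (Meets p q) k (del p q E {p f} {q f}))
    (hA : ∀ f ∈ E, p f = p e₀ → q f ≠ q e₀ → Acyc (Meets p q) k (del p q (E \ F) {p f} {q f}))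
    (hB : Acyc (Meets p q) k (del p q E {p e₀, b} {q e₀})) :
    Acyc (Meets p q) (k + 1) E := by
  have hs := meets_symm p q
  have hr := meets_refl p q
  have hlink : ∀ (E' : Finset ι) (f e : ι),
      e ∈ del p q E' {p f} {q f} ↔ e ∈ E' ∧ ¬ Meets p q f e := by
    intro E' f e
    simp only [mem_del, mem_singleton, Meets, not_or]
    constructor <;> rintro ⟨h1, h2, h3⟩ <;> exact ⟨h1, Ne.symm h2, Ne.symm h3⟩
  refine acyc_of_sdiff_clique hs hr (fun f => del p q E {p f} {q f}) F E
    (fun f hf => ((hF f).1 hf).1) (fun f hf g hg => ?_) (fun f _ => hlink E f) h0 ?_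
  · exact Or.inr (((hF f).1 hf).2.1.trans ((hF g).1 hg).2.1.symm)
  have hmem : ∀ f, f ∈ (E \ F).filter (fun f => p f = p e₀ ∧ q f ≠ q e₀) ↔
      f ∈ E ∧ p f = p e₀ ∧ q f ≠ q e₀ := by
    intro f
    simp only [mem_filter, mem_sdiff, hF]
    tauto
  refine acyc_of_sdiff_clique hs hr (fun f => del p q (E \ F) {p f} {q f})
    ((E \ F).filter fun f => p f = p e₀ ∧ q f ≠ q e₀) (E \ F)
    (filter_subset _ _) (fun f hf g hg => ?_) (fun f _ => hlink _ f)
    (fun f hf => hA f ((hmem f).1 hf).1 ((hmem f).1 hf).2.1 ((hmem f).1 hf).2.2) ?_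
  · exact Or.inl (((hmem f).1 hf).2.1.trans ((hmem g).1 hg).2.1.symm)
  set E₂ := (E \ F) \ (E \ F).filter fun f => p f = p e₀ ∧ q f ≠ q e₀ with hE₂
  have hm₂ : ∀ f, f ∈ E₂ ↔ f ∈ E ∧ (q f = q e₀ → f = e₀ ∨ p f = b) ∧ (p f = p e₀ → q f = q e₀) := by
    intro f
    rw [hE₂, mem_sdiff, hmem, mem_sdiff, hF]
    tauto
  refine acyc_of_sdiff_clique hs hr (fun f => del p q E {p e₀, b} {q e₀})
    (E₂.filter fun f => q f = q e₀ ∧ f ≠ e₀) E₂ (filter_subset _ _) (fun f hf g hg => ?_)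
    (fun f hf e => ?_) (fun _ _ => hB) ?_
  · exact Or.inr ((mem_filter.1 hf).2.1.trans (mem_filter.1 hg).2.1.symm)
  · obtain ⟨hf1, hf2, hf3⟩ := mem_filter.1 hf
    have hfb : p f = b := (((hm₂ f).1 hf1).2.1 hf2).resolve_left hf3
    rw [mem_del, hm₂]
    simp only [Meets, hfb, hf2, mem_insert, mem_singleton, not_or]
    constructor
    · rintro ⟨h1, ⟨h2, h3⟩, h4⟩
      exact ⟨⟨h1, fun h => absurd h h4, fun h => absurd h h2⟩, Ne.symm h3, Ne.symm h4⟩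
    · rintro ⟨⟨h1, h2, h3⟩, h4, h5⟩
      exact ⟨h1, ⟨fun h => h5 (h3 h).symm, Ne.symm h4⟩, Ne.symm h5⟩
  · refine acyc_of_isolated hs (v := e₀) ?_ (fun e he hne => ?_) _
    · simp [hm₂, he₀]
    · obtain ⟨h1, h2⟩ := mem_sdiff.1 he
      obtain ⟨h3, h4, h5⟩ := (hm₂ e).1 h1
      have h6 : q e ≠ q e₀ := fun h => h2 (mem_filter.2 ⟨h1, h, hne⟩)
      rintro (h | h)
      · exact h6 (h5 h.symm)
      · exact h6 h.symm

/-- The induction hypothesis on proper subgraphs `E'` of `E`, in terms of the loss `a` in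
matching size (starting from `m`) and the loss `w` in edges. -/
def Reducible (p : ι → β) (q : ι → γ) (ρ : ℕ) (E : Finset ι) (m k : ℕ) : Prop :=
  ∀ E' ⊂ E, ∀ M ⊆ E', IsM p q M → ∀ j a w : ℕ, m ≤ M.card + a → E.card ≤ E'.card + w →
    (2 * ρ + 1) * a + w ≤ j * (6 * ρ + 5) → Acyc (Meets p q) (k + 1 - j) E'

lemma Reducible.swap {p : ι → β} {q : ι → γ} {ρ : ℕ} {E : Finset ι} {m k : ℕ}
    (h : Reducible p q ρ E m k) : Reducible q p ρ E m k := by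
  rw [Reducible, meets_swap q p]
  exact fun E' hE' M hM hMM => h E' hE' M hM hMM.symm

lemma del_ssubset {p : ι → β} {q : ι → γ} {E : Finset ι} {S : Finset β} {T : Finset γ} {e : ι}
    (he : e ∈ E) (h : p e ∈ S ∨ q e ∈ T) : del p q E S T ⊂ E :=
  (ssubset_iff_of_subset (del_subset _ _ _ _ _)).2 ⟨e, he, fun h' => by
    rw [mem_del] at h'
    tauto⟩

/-- Exploding a single edge. -/
lemma Reducible.acyc_del {p : ι → β} {q : ι → γ} {ρ : ℕ} {E M : Finset ι} {k : ℕ}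
    (h : Reducible p q ρ E M.card k) (hp : DegLE p (ρ + 2) E) (hq : DegLE q (ρ + 2) E)
    (hM : IsM p q M) (hME : M ⊆ E) {f : ι} (hf : f ∈ E) :
    Acyc (Meets p q) k (del p q E {p f} {q f}) := by
  have h1 := card_add_le_card_del hp hq {p f} {q f} (I := {f}) (by simp [hf])
  have h2 := card_add_le_card_del hM.1 hM.2 {p f} {q f} (I := ∅) (by simp)
  simp only [card_singleton, card_empty] at h1 h2
  exact h _ (del_ssubset hf (by simp)) (del p q M {p f} {q f}) (filter_subset_filter _ hME)
    (hM.mono (del_subset _ _ _ _ _)) 1 2 (2 * ρ + 3) (by omega) (by omega) (by omega)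

/-- The number of edges at a vertex `q e₀` other than `e₀` and the late edge `e₁`. -/
lemma card_star_le {p : ι → β} {q : ι → γ} {ρ : ℕ} {E F : Finset ι} {e₀ e₁ : ι} (he₀ : e₀ ∈ E)
    (he₁ : e₁ ∈ E) (hne : e₁ ≠ e₀) (hq₁ : q e₁ = q e₀) (hq : DegLE q (ρ + 2) E)
    (hF : ∀ f, f ∈ F ↔ f ∈ E ∧ q f = q e₀ ∧ f ≠ e₀ ∧ p f ≠ p e₁) : F.card ≤ ρ := by
  have h1 : insert e₀ (insert e₁ F) ⊆ E.filter fun f => q f = q e₀ := by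
    intro f hf
    simp only [mem_insert, hF] at hf
    rcases hf with rfl | rfl | hf
    · simp [he₀]
    · simp [he₁, hq₁]
    · simp [hf.1, hf.2.1]
  have h2 := (card_le_card h1).trans (hq _)
  have h3 : e₁ ∉ F := by simp [hF]
  have h4 : e₀ ∉ insert e₁ F := by simp [hF, hne.symm]
  rw [card_insert_of_notMem h4, card_insert_of_notMem h3] at h2
  omega

/-- The case in which a maximum matching leaves a vertex on the side of `q` uncovered. -/
lemma acyc_of_uncovered {p : ι → β} {q : ι → γ} {ρ : ℕ} {E M : Finset ι} {k : ℕ}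
    (h : Reducible p q ρ E M.card k) (hp : DegLE p (ρ + 2) E) (hq : DegLE q (ρ + 2) E)
    (hM : IsM p q M) (hME : M ⊆ E) (hmax : ∀ M' ⊆ E, IsM p q M' → M'.card ≤ M.card)
    {e : ι} (he : e ∈ E) (heM : ∀ f ∈ M, q f ≠ q e) : Acyc (Meets p q) (k + 1) E := by
  obtain ⟨m, hm, hme⟩ : ∃ m ∈ M, p m = p e := by
    by_contra! hcon
    obtain ⟨h1, h2⟩ := hM.insert hcon heM
    have := hmax _ (insert_subset he hME) h1
    omega
  have hmne : m ≠ e := fun hh => heM m hm (by rw [hh])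
  rw [meets_swap]
  have hF : ∀ f, f ∈ E.filter (fun f => p f = p e ∧ f ≠ e ∧ q f ≠ q m) ↔
      f ∈ E ∧ p f = p e ∧ f ≠ e ∧ q f ≠ q m := fun f => mem_filter
  have hFc := card_star_le (p := q) (q := p) he (hME hm) hmne hme hp hF
  set F := E.filter (fun f => p f = p e ∧ f ≠ e ∧ q f ≠ q m)
  have hFE : F ⊆ E := filter_subset _ _
  have hMF : M ⊆ E \ F := by
    intro f hf
    refine mem_sdiff.2 ⟨hME hf, fun hf' => ?_⟩
    have := (hF f).1 hf'
    exact this.2.2.2 (congrArg q (degLE_one_iff.1 hM.1 f hf m hm (this.2.1.trans hme.symm)))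
  have hEF : E.card = (E \ F).card + F.card := (card_sdiff_add_card_eq_card hFE).symm
  refine acyc_of_star (p := q) (q := p) he (q m) hF (fun f hf => ?_) (fun f hf hfd hfx => ?_) ?_
  · rw [del_swap, meets_swap]
    exact h.acyc_del hp hq hM hME ((hF f).1 hf).1
  · rw [del_swap, meets_swap]
    have hfF : f ∉ F := fun h' => hfx ((hF f).1 h').2.1
    have h1 := card_add_le_card_del (hp.mono (sdiff_subset (t := F)))
      (hq.mono (sdiff_subset (t := F))) {p f} {q f} (I := {f}) (by simp [hf, hfF])
    have h2 := card_add_le_card_del hM.1 hM.2 {p f} ∅ (I := ∅) (by simp)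
    have h3 : del p q M {p f} ∅ ⊆ del p q (E \ F) {p f} {q f} := by
      intro g hg
      rw [mem_del] at hg ⊢
      exact ⟨hMF hg.1, hg.2.1, by simpa [hfd] using heM g hg.1⟩
    simp only [card_singleton, card_empty] at h1 h2
    refine h (del p q (E \ F) {p f} {q f}) ((filter_subset_filter _ sdiff_subset).trans_ssubset
      (del_ssubset (S := {p f}) (T := {q f}) hf (by simp))) _ h3 (hM.mono (del_subset _ _ _ _ _))
      1 1 (3 * ρ + 3) (by omega) (by omega) (by omega)
  · rw [del_swap, meets_swap]
    have h1 := card_add_le_card_del hp hq {p e} {q e, q m} (I := {e, m}) (by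
      intro f hf
      rcases mem_insert.1 hf with rfl | hf
      · simp [he]
      · rw [mem_singleton.1 hf]
        simp [hME hm, hme])
    have h2 : (M.erase m).card + 1 = M.card := card_erase_add_one hm
    have h3 : M.erase m ⊆ del p q E {p e} {q e, q m} := by
      intro g hg
      obtain ⟨hg1, hg2⟩ := mem_erase.1 hg
      rw [mem_del]
      refine ⟨hME hg2, ?_, ?_⟩
      · rw [mem_singleton, ← hme]
        exact fun h' => hg1 (degLE_one_iff.1 hM.1 g hg2 m hm h')
      · simp only [mem_insert, mem_singleton, not_or]
        exact ⟨heM g hg2, fun h' => hg1 (degLE_one_iff.1 hM.2 g hg2 m hm h')⟩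
    rw [card_pair hmne.symm, card_pair (heM m hm).symm, card_singleton] at h1
    exact h _ (del_ssubset he (by simp)) _ h3 (hM.mono (erase_subset _ _))
      1 1 (3 * ρ + 4) (by omega) (by omega) (by omega)

end Bipartite

section Critical
variable {ι β γ : Type*} [Fintype ι] [DecidableEq ι] [DecidableEq β] [DecidableEq γ]

/-- The neighbourhood of a set of vertices on the side of `p`. -/
def nb (p : ι → β) (q : ι → γ) (E : Finset ι) (Q : Finset β) : Finset γ :=
  (E.filter fun e => p e ∈ Q).image q

lemma mem_nb {p : ι → β} {q : ι → γ} {E : Finset ι} {Q : Finset β} {c : γ} :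
    c ∈ nb p q E Q ↔ ∃ e ∈ E, p e ∈ Q ∧ q e = c := by
  simp [nb, and_assoc]

lemma mem_nb_of_mem {p : ι → β} {q : ι → γ} {E : Finset ι} {Q : Finset β} {e : ι} (he : e ∈ E)
    (h : p e ∈ Q) : q e ∈ nb p q E Q := mem_nb.2 ⟨e, he, h, rfl⟩

lemma nb_mono {p : ι → β} {q : ι → γ} {E : Finset ι} {Q Q' : Finset β} (h : Q ⊆ Q') :
    nb p q E Q ⊆ nb p q E Q' := fun c hc => by
  obtain ⟨e, he, h1, rfl⟩ := mem_nb.1 hc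
  exact mem_nb_of_mem he (h h1)

/-- A set `Y` of vertices, minimal subject to having no more than `|Y|` neighbours, and a matching
`MR` that completes any perfect matching between `Y` and its neighbours to one of size `|M|`. -/
structure Critical (p : ι → β) (q : ι → γ) (E M : Finset ι) (Y : Finset β) (MR : Finset ι) :
    Prop where
  nonempty : Y.Nonempty
  card_nb : (nb p q E Y).card = Y.card
  lt_card_nb : ∀ Q ⊂ Y, Q.Nonempty → Q.card + 1 ≤ (nb p q E Q).card
  rest_subset : MR ⊆ E
  rest_isM : IsM p q MR
  rest_left : ∀ e ∈ MR, p e ∉ Y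
  rest_right : ∀ e ∈ MR, q e ∉ nb p q E Y
  card_rest : M.card = MR.card + Y.card

lemma Reducible.acyc_del_sdiff {p : ι → β} {q : ι → γ} {ρ : ℕ} {E F M : Finset ι} {m k : ℕ}
    (h : Reducible p q ρ E m k) (hp : DegLE p (ρ + 2) E) (hq : DegLE q (ρ + 2) E)
    (hFE : F ⊆ E) (hF : F.card ≤ ρ) {f : ι} (hf : f ∈ E) (hfF : f ∉ F)
    (hM : IsM p q M) (hME : ∀ e ∈ M, e ∈ E ∧ e ∉ F ∧ p e ≠ p f ∧ q e ≠ q f)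
    (hm : m ≤ M.card + 1) : Acyc (Meets p q) k (del p q (E \ F) {p f} {q f}) := by
  have h1 := card_add_le_card_del (hp.mono (sdiff_subset (t := F)))
    (hq.mono (sdiff_subset (t := F))) {p f} {q f} (I := {f}) (by simp [hf, hfF])
  have h2 := card_sdiff_add_card_eq_card hFE
  simp only [card_singleton] at h1
  exact h (del p q (E \ F) {p f} {q f}) ((filter_subset_filter _ sdiff_subset).trans_ssubset
    (del_ssubset (S := {p f}) (T := {q f}) hf (by simp))) M
    (fun e he => by
      obtain ⟨h1, h2, h3, h4⟩ := hME e he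
      simp [mem_del, h1, h2, h3, h4]) hM
    1 1 (3 * ρ + 3) hm (by omega) (by omega)

lemma Critical.acyc_of_card_eq_one {p : ι → β} {q : ι → γ} {ρ : ℕ} {E M MR : Finset ι}
    {Y : Finset β} {k : ℕ} (hY : Critical p q E M Y MR) (h : Reducible p q ρ E M.card k)
    (hp : DegLE p (ρ + 2) E) (hq : DegLE q (ρ + 2) E) (hM : IsM p q M) (hME : M ⊆ E)
    (h1 : Y.card = 1) : Acyc (Meets p q) (k + 1) E := by
  obtain ⟨b, rfl⟩ := card_eq_one.1 h1
  obtain ⟨c, hc⟩ := card_eq_one.1 (hY.card_nb.trans h1)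
  obtain ⟨e₀, he₀, hb, rfl⟩ := mem_nb.1 (hc ▸ mem_singleton_self c : c ∈ nb p q E {b})
  obtain rfl := mem_singleton.1 hb
  refine acyc_of_star (F := E.filter fun f => q f = q e₀ ∧ f ≠ e₀ ∧ p f ≠ p e₀) he₀ (p e₀)
    (fun f => mem_filter) (fun f hf => h.acyc_del hp hq hM hME (mem_filter.1 hf).1)
    (fun f hf hf1 hf2 => ?_) ?_
  · have := mem_nb_of_mem (p := p) (q := q) (Q := {p e₀}) hf (by simp [hf1])
    rw [hc, mem_singleton] at this
    exact absurd this hf2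
  · rw [pair_eq_singleton]
    exact h.acyc_del hp hq hM hME he₀

/-- The vertices `b, b', c, c'` span a component of `E` that is an `r`-regular `C₄`. -/
def IsC4 (p : ι → β) (q : ι → γ) (r : ℕ) (E : Finset ι) (b b' : β) (c c' : γ) : Prop :=
  b ≠ b' ∧ c ≠ c' ∧
  (∀ e ∈ E, p e = b ∨ p e = b' ∨ q e = c ∨ q e = c' → (p e = b ∨ p e = b') ∧ (q e = c ∨ q e = c')) ∧
  ((∃ e ∈ E, p e = b ∧ q e = c) ∧ (∃ e ∈ E, p e = b ∧ q e = c') ∧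
    (∃ e ∈ E, p e = b' ∧ q e = c) ∧ ∃ e ∈ E, p e = b' ∧ q e = c') ∧
  (E.filter fun e => p e = b).card = r ∧ (E.filter fun e => p e = b').card = r ∧
  (E.filter fun e => q e = c).card = r ∧ (E.filter fun e => q e = c').card = r

lemma card_filter_eq_add {S : Type*} [DecidableEq S] {E : Finset ι} {P : ι → Prop}
    [DecidablePred P] {g : ι → S} {s t : S} (hst : s ≠ t) (h : ∀ e ∈ E, P e → g e = s ∨ g e = t) :
    (E.filter P).card = (E.filter fun e => P e ∧ g e = s).card +
      (E.filter fun e => P e ∧ g e = t).card := by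
  rw [← card_union_of_disjoint (disjoint_left.2 fun e he he' =>
    hst ((mem_filter.1 he).2.2.symm.trans (mem_filter.1 he').2.2)), ← filter_or]
  congr 1
  refine filter_congr fun e he => ?_
  have := h e he
  tauto

lemma Critical.acyc_of_pair {p : ι → β} {q : ι → γ} {ρ : ℕ} {E M MR : Finset ι}
    {Y : Finset β} {k : ℕ} (hY : Critical p q E M Y MR) (h : Reducible p q ρ E M.card k)
    (hp : DegLE p (ρ + 2) E) (hq : DegLE q (ρ + 2) E) (hM : IsM p q M) (hME : M ⊆ E)
    {b b' : β} {c c' : γ} (hbY : Y = {b, b'}) (hbb : b ≠ b') (hcY : nb p q E Y = {c, c'})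
    (hcc : c ≠ c') (hbc : ∃ e ∈ E, p e = b ∧ q e = c) (hbc' : ∃ e ∈ E, p e = b' ∧ q e = c)
    (hB : Acyc (Meets p q) k (del p q E {b, b'} {c})) : Acyc (Meets p q) (k + 1) E := by
  obtain ⟨e₀, he₀, rfl, rfl⟩ := hbc
  obtain ⟨e₁, he₁, rfl, hq₁⟩ := hbc'
  have hne : e₁ ≠ e₀ := fun h' => hbb (by rw [h'])
  have hF : ∀ f, f ∈ E.filter (fun f => q f = q e₀ ∧ f ≠ e₀ ∧ p f ≠ p e₁) ↔
      f ∈ E ∧ q f = q e₀ ∧ f ≠ e₀ ∧ p f ≠ p e₁ := fun f => mem_filter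
  have hFc := card_star_le he₀ he₁ hne hq₁ hq hF
  have hcnb : q e₀ ∈ nb p q E Y := by rw [hcY]; simp
  refine acyc_of_star he₀ (p e₁) hF (fun f hf => h.acyc_del hp hq hM hME ((hF f).1 hf).1)
    (fun f hf hf1 hf2 => ?_) hB
  have hfnb : q f ∈ nb p q E Y := mem_nb_of_mem hf (by rw [hf1, hbY]; simp)
  obtain ⟨hM1, hM2⟩ := hY.rest_isM.insert (e := e₁)
    (fun g hg h' => hY.rest_left g hg (by rw [h', hbY]; simp))
    (fun g hg h' => hY.rest_right g hg (by rw [h', hq₁]; exact hcnb))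
  refine h.acyc_del_sdiff hp hq (filter_subset _ _) hFc hf (fun h' => hf2 ((hF f).1 h').2.1) hM1
    (fun g hg => ?_) ?_
  · rcases mem_insert.1 hg with rfl | hg
    · refine ⟨he₁, fun h' => ((hF _).1 h').2.2.2 rfl, ?_, ?_⟩
      · rw [hf1]; exact hbb.symm
      · rw [hq₁]; exact hf2.symm
    · refine ⟨hY.rest_subset hg, fun h' => ?_, fun h' => ?_, fun h' => ?_⟩
      · exact hY.rest_right g hg (by rw [((hF _).1 h').2.1]; exact hcnb)
      · exact hY.rest_left g hg (by rw [h', hf1, hbY]; simp)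
      · exact hY.rest_right g hg (by rw [h']; exact hfnb)
  · rw [hM2, hY.card_rest, hbY, card_pair hbb]

lemma Critical.acyc_of_card_eq_two {p : ι → β} {q : ι → γ} {ρ : ℕ} {E M MR : Finset ι}
    {Y : Finset β} {k : ℕ} (hY : Critical p q E M Y MR) (h : Reducible p q ρ E M.card k)
    (hp : DegLE p (ρ + 2) E) (hq : DegLE q (ρ + 2) E) (hM : IsM p q M) (hME : M ⊆ E)
    (hC4 : ∀ b b' c c', IsC4 p q (ρ + 2) E b b' c c' →
      Acyc (Meets p q) k (del p q E {b, b'} {c}))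
    (h2 : Y.card = 2) : Acyc (Meets p q) (k + 1) E := by
  obtain ⟨b, b', hbb, hbY⟩ := card_eq_two.1 h2
  obtain ⟨c, c', hcc, hcY⟩ := card_eq_two.1 (hY.card_nb.trans h2)
  have hfull : ∀ y ∈ Y, nb p q E {y} = {c, c'} := by
    intro y hy
    rw [← hcY]
    refine eq_of_subset_of_card_le (nb_mono (singleton_subset_iff.2 hy)) ?_
    have := hY.lt_card_nb {y} (Finset.ssubset_iff_subset_ne.2 ⟨singleton_subset_iff.2 hy, fun h' => by
      rw [← h'] at h2; simp at h2⟩) (singleton_nonempty y)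
    rw [hY.card_nb, h2]
    simpa using this
  have hadj : ∀ y ∈ Y, ∀ d ∈ ({c, c'} : Finset γ), ∃ e ∈ E, p e = y ∧ q e = d := by
    intro y hy d hd
    rw [← hfull y hy] at hd
    obtain ⟨e, he, h1, h2⟩ := mem_nb.1 hd
    exact ⟨e, he, mem_singleton.1 h1, h2⟩
  have hb : b ∈ Y := by simp [hbY]
  have hb' : b' ∈ Y := by simp [hbY]
  have hc : c ∈ ({c, c'} : Finset γ) := by simp
  have hc' : c' ∈ ({c, c'} : Finset γ) := by simp
  have hin : ∀ e ∈ E, p e = b ∨ p e = b' → q e = c ∨ q e = c' := by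
    intro e he hpe
    have := mem_nb_of_mem (p := p) (q := q) (Q := Y) he (by simpa [hbY] using hpe)
    simpa [hcY] using this
  have hB : ∀ d ∈ ({c, c'} : Finset γ),
      (E.filter fun e => (p e = b ∨ p e = b') ∨ q e = d).card ≤ 2 * ρ + 3 →
      Acyc (Meets p q) k (del p q E {b, b'} {d}) := by
    intro d hd hcard
    obtain ⟨e, he, h1, h3⟩ := hadj b hb d hd
    refine h _ (del_ssubset he (by simp [h3])) MR (fun g hg => ?_) hY.rest_isM 1 2 (2 * ρ + 3)
      (by rw [hY.card_rest, h2]) ?_ (by omega)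
    · rw [mem_del, ← hbY, mem_singleton]
      exact ⟨hY.rest_subset hg, hY.rest_left g hg, fun h' => hY.rest_right g hg (by
        rw [h', hcY]; exact hd)⟩
    · refine le_trans ?_ (Nat.add_le_add_left hcard _)
      refine (card_le_card fun g hg => ?_).trans (card_union_le _ _)
      simp only [mem_union, mem_del, mem_filter, mem_insert, mem_singleton, hg, true_and]
      tauto
  by_cases hBc : (E.filter fun e => (p e = b ∨ p e = b') ∨ q e = c).card ≤ 2 * ρ + 3
  · exact hY.acyc_of_pair h hp hq hM hME hbY hbb hcY hcc (hadj b hb c hc) (hadj b' hb' c hc)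
      (hB c hc hBc)
  by_cases hBc' : (E.filter fun e => (p e = b ∨ p e = b') ∨ q e = c').card ≤ 2 * ρ + 3
  · exact hY.acyc_of_pair h hp hq hM hME hbY hbb (hcY.trans (pair_comm _ _)) hcc.symm
      (hadj b hb c' hc') (hadj b' hb' c' hc') (hB c' hc' hBc')
  refine hY.acyc_of_pair h hp hq hM hME hbY hbb hcY hcc (hadj b hb c hc) (hadj b' hb' c hc)
    (hC4 b b' c c' ?_)
  have hsplit : ∀ d, (E.filter fun e => (p e = b ∨ p e = b') ∨ q e = d).card =
      (E.filter fun e => p e = b ∨ p e = b').card +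
        (E.filter fun e => ¬ (p e = b ∨ p e = b') ∧ q e = d).card := by
    intro d
    rw [← card_union_of_disjoint (disjoint_left.2 fun e he he' =>
      (mem_filter.1 he').2.1 (mem_filter.1 he).2), ← filter_or]
    congr 1
    refine filter_congr fun e _ => ?_
    tauto
  have hdeg : ∀ d, (E.filter fun e => q e = d).card =
      (E.filter fun e => (p e = b ∨ p e = b') ∧ q e = d).card +
        (E.filter fun e => ¬ (p e = b ∨ p e = b') ∧ q e = d).card := by
    intro d
    rw [← card_union_of_disjoint (disjoint_left.2 fun e he he' =>
      (mem_filter.1 he').2.1 (mem_filter.1 he).2.1), ← filter_or]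
    congr 1
    refine filter_congr fun e _ => ?_
    tauto
  have hI := card_filter_eq_add hcc hin
  have hI' := card_filter_eq_add (E := E) (P := fun e => p e = b ∨ p e = b') (g := p) hbb
    fun e _ he => he
  have hIb : (E.filter fun e => (p e = b ∨ p e = b') ∧ p e = b) = E.filter fun e => p e = b :=
    filter_congr fun e _ => by tauto
  have hIb' : (E.filter fun e => (p e = b ∨ p e = b') ∧ p e = b') = E.filter fun e => p e = b' :=
    filter_congr fun e _ => by tauto
  rw [hIb, hIb'] at hI'
  have h1 := hp b
  have h2 := hp b'
  have h3 := hq c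
  have h4 := hq c'
  have h5 := hdeg c
  have h6 := hdeg c'
  have h7 := hsplit c
  have h8 := hsplit c'
  have hout : (E.filter fun e => ¬ (p e = b ∨ p e = b') ∧ q e = c) = ∅ :=
    card_eq_zero.1 (by omega)
  have hout' : (E.filter fun e => ¬ (p e = b ∨ p e = b') ∧ q e = c') = ∅ :=
    card_eq_zero.1 (by omega)
  refine ⟨hbb, hcc, fun e he hor => ?_, ⟨hadj b hb c hc, hadj b hb c' hc', hadj b' hb' c hc,
    hadj b' hb' c' hc'⟩, by omega, by omega, by omega, by omega⟩
  have hpe : p e = b ∨ p e = b' := by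
    by_contra hcon
    rcases hor with h' | h' | h' | h'
    · exact hcon (Or.inl h')
    · exact hcon (Or.inr h')
    · exact notMem_empty e (hout ▸ mem_filter.2 ⟨he, hcon, h'⟩)
    · exact notMem_empty e (hout' ▸ mem_filter.2 ⟨he, hcon, h'⟩)
  exact ⟨hpe, hin e he hpe⟩

end Critical

section Large
variable {ι β γ : Type*} [Fintype ι] [DecidableEq ι] [DecidableEq β] [DecidableEq γ]

/-- A configuration of edges `e₀ = (b, c)`, `e₁ = (b'', c)`, `e₂ = (x, d)` and `e₃` (one of `(x, c)`
and `(b, d)`) inside `Y` and its neighbourhood, such that each neighbour `c' ≠ c` of `b` or `x` can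
be deleted together with `b, b'', c` and leave the rest of `Y` matchable. -/
structure Gadget (p : ι → β) (q : ι → γ) (E : Finset ι) (Y : Finset β) (e₀ e₁ e₂ e₃ : ι) :
    Prop where
  mem₀ : e₀ ∈ E
  mem₁ : e₁ ∈ E
  mem₂ : e₂ ∈ E
  mem₃ : e₃ ∈ E
  left₀ : p e₀ ∈ Y
  left₁ : p e₁ ∈ Y
  left₂ : p e₂ ∈ Y
  ne₁₀ : p e₁ ≠ p e₀
  ne₂₀ : p e₂ ≠ p e₀
  ne₂₁ : p e₂ ≠ p e₁
  right₁ : q e₁ = q e₀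
  right₂ : q e₂ ≠ q e₀
  extra : (p e₃ = p e₂ ∧ q e₃ = q e₀) ∨ (p e₃ = p e₀ ∧ q e₃ = q e₂)
  matchable : ∀ f ∈ E, p f = p e₀ ∨ p f = p e₂ → q f ≠ q e₀ → ∃ N ⊆ E, IsM p q N ∧
    N.card + 2 = Y.card ∧
    (∀ e ∈ N, p e ∈ Y ∧ p e ≠ p e₀ ∧ p e ≠ p e₁ ∧ q e ≠ q e₀ ∧ q e ≠ q f) ∧ ∃ e ∈ N, p e = p e₂

lemma Critical.isM_union_rest {p : ι → β} {q : ι → γ} {E M MR N : Finset ι} {Y : Finset β}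
    (hY : Critical p q E M Y MR) (hN : IsM p q N) (hNE : N ⊆ E) (hNY : ∀ e ∈ N, p e ∈ Y) :
    IsM p q (N ∪ MR) ∧ (N ∪ MR).card = N.card + MR.card :=
  hN.union hY.rest_isM (fun e he f hf h' => hY.rest_left f hf (h' ▸ hNY e he))
    (fun e he f hf h' => hY.rest_right f hf (h' ▸ mem_nb_of_mem (hNE he) (hNY e he)))

lemma Gadget.acyc_inner {p : ι → β} {q : ι → γ} {ρ : ℕ} {E M MR : Finset ι}
    {Y : Finset β} {k : ℕ} {e₀ e₁ e₂ e₃ : ι} (hG : Gadget p q E Y e₀ e₁ e₂ e₃)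
    (hY : Critical p q E M Y MR) (h : Reducible p q ρ E M.card (k + 1))
    (hp : DegLE p (ρ + 2) E) (hq : DegLE q (ρ + 2) E) :
    Acyc (Meets p q) (k + 1) (del p q E {p e₀, p e₁} {q e₀}) := by
  obtain ⟨N, hNE, hN, hNc, hNm, e₄, he₄, hp₄⟩ := hG.matchable e₂ hG.mem₂ (Or.inr rfl) hG.right₂
  obtain ⟨-, -, -, h4c, h4d⟩ := hNm e₄ he₄
  have hcY : q e₀ ∈ nb p q E Y := mem_nb_of_mem hG.mem₀ hG.left₀
  have hdY : q e₂ ∈ nb p q E Y := mem_nb_of_mem hG.mem₂ hG.left₂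
  have hMc := hY.card_rest
  set E₁ := del p q E {p e₀, p e₁} {q e₀} with hE₁
  have hE₁E : E₁ ⊆ E := del_subset _ _ _ _ _
  have hmem : ∀ e, e ∈ E₁ ↔ e ∈ E ∧ p e ≠ p e₀ ∧ p e ≠ p e₁ ∧ q e ≠ q e₀ := by
    intro e
    rw [hE₁, mem_del]
    simp [and_assoc]
  have hNE₁ : N ⊆ E₁ := fun e he => (hmem e).2
    ⟨hNE he, (hNm e he).2.1, (hNm e he).2.2.1, (hNm e he).2.2.2.1⟩
  have hRE₁ : MR ⊆ E₁ := fun e he => (hmem e).2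
    ⟨hY.rest_subset he, fun h' => hY.rest_left e he (h' ▸ hG.left₀),
      fun h' => hY.rest_left e he (h' ▸ hG.left₁), fun h' => hY.rest_right e he (h' ▸ hcY)⟩
  have he₂E₁ : e₂ ∈ E₁ := (hmem e₂).2 ⟨hG.mem₂, hG.ne₂₀, hG.ne₂₁, hG.right₂⟩
  have hne₄ : e₄ ≠ e₂ := fun h' => h4d (by rw [h'])
  have hE₁c := card_add_le_card_del hp hq {p e₀, p e₁} {q e₀} (I := {e₀, e₁}) (by
    intro f hf
    rcases mem_insert.1 hf with rfl | hf
    · simp [hG.mem₀]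
    · rw [mem_singleton.1 hf]
      simp [hG.mem₁, hG.right₁])
  rw [← hE₁, card_pair hG.ne₁₀.symm, card_pair (fun h' => hG.ne₁₀ (by rw [h'])),
    card_singleton] at hE₁c
  have hssub : ∀ E' ⊆ E₁, E' ⊂ E := fun E' hE' =>
    hE'.trans_ssubset (del_ssubset hG.mem₀ (by simp))
  have hF : ∀ f, f ∈ E₁.filter (fun f => p f = p e₂ ∧ f ≠ e₂ ∧ q f ≠ q e₄) ↔
      f ∈ E₁ ∧ p f = p e₂ ∧ f ≠ e₂ ∧ q f ≠ q e₄ := fun f => mem_filter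
  have hFc := card_star_le (p := q) (q := p) he₂E₁ (hNE₁ he₄) hne₄ hp₄ (hp.mono hE₁E) hF
  set F := E₁.filter (fun f => p f = p e₂ ∧ f ≠ e₂ ∧ q f ≠ q e₄)
  have hFE₁ : F ⊆ E₁ := filter_subset _ _
  rw [meets_swap]
  refine acyc_of_star (p := q) (q := p) he₂E₁ (q e₄) hF (fun f hf => ?_) (fun f hf hfd hfx => ?_) ?_
  · rw [del_swap, meets_swap]
    obtain ⟨hf1, hf2, -, -⟩ := (hF f).1 hf
    have hfE := (hmem f).1 hf1
    have hfY : q f ∈ nb p q E Y := mem_nb_of_mem hfE.1 (hf2 ▸ hG.left₂)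
    obtain ⟨N', hNE', hN', hNc', hNm', -⟩ := hG.matchable f hfE.1 (Or.inr hf2) hfE.2.2.2
    have h1 := card_add_le_card_del hN'.1 hN'.2 {p f} ∅ (I := ∅) (by simp)
    have hsub : del p q N' {p f} ∅ ⊆ N' := del_subset _ _ _ _ _
    obtain ⟨hU1, hU2⟩ := hY.isM_union_rest (hN'.mono hsub) (hsub.trans hNE')
      fun e he => (hNm' e (hsub he)).1
    have h2 := card_add_le_card_del (hp.mono hE₁E) (hq.mono hE₁E) {p f} {q f} (I := {f})
      (by simp [hf1])
    simp only [card_singleton, card_empty] at h1 h2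
    refine h _ (hssub _ (del_subset _ _ _ _ _)) _ (fun e he => ?_) hU1 2 3 (5 * ρ + 7)
      (by omega) (by omega) (by omega)
    simp only [mem_del, mem_singleton, hmem]
    rcases mem_union.1 he with he | he
    · obtain ⟨he1, he2, -⟩ := mem_del.1 he
      have := hNm' e he1
      exact ⟨⟨hNE' he1, this.2.1, this.2.2.1, this.2.2.2.1⟩, by simpa using he2, this.2.2.2.2⟩
    · exact ⟨(hmem e).1 (hRE₁ he), fun h' => hY.rest_left e he (by rw [h', hf2]; exact hG.left₂),
        fun h' => hY.rest_right e he (h' ▸ hfY)⟩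
  · rw [del_swap, meets_swap]
    have hfF : f ∉ F := fun h' => hfx ((hF f).1 h').2.1
    obtain ⟨hU1, hU2⟩ := hY.isM_union_rest hN hNE fun e he => (hNm e he).1
    have h1 := card_add_le_card_del hU1.1 hU1.2 {p f} ∅ (I := ∅) (by simp)
    have h2 := card_add_le_card_del ((hp.mono hE₁E).mono (sdiff_subset (t := F)))
      ((hq.mono hE₁E).mono (sdiff_subset (t := F))) {p f} {q f} (I := {f}) (by simp [hf, hfF])
    have h3 := card_sdiff_add_card_eq_card hFE₁
    simp only [card_singleton, card_empty] at h1 h2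
    refine h _ (hssub _ ((del_subset _ _ _ _ _).trans sdiff_subset)) _ (fun e he => ?_)
      (hU1.mono (del_subset p q _ {p f} ∅)) 2 3 (6 * ρ + 7)
      (by omega) (by omega) (by omega)
    obtain ⟨he1, he2, -⟩ := mem_del.1 he
    rw [mem_del, mem_sdiff]
    rcases mem_union.1 he1 with he1 | he1
    · refine ⟨⟨hNE₁ he1, fun h' => ?_⟩, he2, ?_⟩
      · have := (hF e).1 h'
        exact this.2.2.2 (congrArg q (degLE_one_iff.1 hN.1 e he1 e₄ he₄ (this.2.1.trans hp₄.symm)))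
      · rw [mem_singleton, hfd]
        exact (hNm e he1).2.2.2.2
    · refine ⟨⟨hRE₁ he1, fun h' => ?_⟩, he2, ?_⟩
      · exact hY.rest_left e he1 (((hF e).1 h').2.1 ▸ hG.left₂)
      · rw [mem_singleton, hfd]
        exact fun h' => hY.rest_right e he1 (h' ▸ hdY)
  · rw [del_swap, meets_swap]
    have h1 : (N.erase e₄).card + 1 = N.card := card_erase_add_one he₄
    obtain ⟨hU1, hU2⟩ := hY.isM_union_rest (hN.mono (erase_subset e₄ N))
      ((erase_subset e₄ N).trans hNE) fun e he => (hNm e (mem_of_mem_erase he)).1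
    have h2 := card_add_le_card_del hp hq ({p e₀, p e₁} ∪ {p e₂}) ({q e₀} ∪ {q e₂, q e₄})
      (I := {e₀, e₁, e₂, e₃, e₄}) (by
        intro f hf
        simp only [mem_insert, mem_singleton] at hf
        have hx := hG.extra
        rcases hf with rfl | rfl | rfl | rfl | rfl
        · simp [hG.mem₀]
        · simp [hG.mem₁, hG.right₁]
        · simp [hG.mem₂]
        · rcases hx with ⟨h1, h2⟩ | ⟨h1, h2⟩ <;> simp [hG.mem₃, h1, h2]
        · simp [hNE he₄, hp₄])
    have hI : ({e₀, e₁, e₂, e₃, e₄} : Finset ι).card = 5 := by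
      have hx := hG.extra
      have h01 : e₀ ≠ e₁ := fun h' => hG.ne₁₀ (by rw [h'])
      have h02 : e₀ ≠ e₂ := fun h' => hG.ne₂₀ (by rw [h'])
      have h04 : e₀ ≠ e₄ := fun h' => h4c (by rw [h'])
      have h12 : e₁ ≠ e₂ := fun h' => hG.ne₂₁ (by rw [h'])
      have h14 : e₁ ≠ e₄ := fun h' => h4c (by rw [← h', hG.right₁])
      have h03 : e₀ ≠ e₃ := by
        rintro rfl
        rcases hx with h' | h'
        · exact hG.ne₂₀ h'.1.symm
        · exact hG.right₂ h'.2.symm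
      have h13 : e₁ ≠ e₃ := by
        rintro rfl
        rcases hx with h' | h'
        · exact hG.ne₂₁ h'.1.symm
        · exact hG.ne₁₀ h'.1
      have h23 : e₂ ≠ e₃ := by
        rintro rfl
        rcases hx with h' | h'
        · exact hG.right₂ h'.2
        · exact hG.ne₂₀ h'.1
      have h34 : e₃ ≠ e₄ := by
        rintro rfl
        rcases hx with h' | h'
        · exact h4c h'.2
        · exact h4d h'.2
      rw [card_insert_of_notMem, card_insert_of_notMem, card_insert_of_notMem, card_pair h34]
      · simp [h23, hne₄.symm]
      · simp [h12, h13, h14]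
      · simp [h01, h02, h03, h04]
    have hS : (({p e₀, p e₁} ∪ {p e₂} : Finset β)).card ≤ 3 :=
      (card_union_le _ _).trans (by rw [card_singleton]; exact Nat.succ_le_succ card_le_two)
    have hT : (({q e₀} ∪ {q e₂, q e₄} : Finset γ)).card ≤ 3 :=
      (card_union_le _ _).trans (by rw [card_singleton, add_comm]; exact Nat.succ_le_succ card_le_two)
    have h3 := Nat.mul_le_mul_left (ρ + 2) (Nat.add_le_add hS hT)
    rw [← del_del, ← hE₁, hI] at h2
    refine h _ (hssub _ (del_subset _ _ _ _ _)) _ (fun e he => ?_) hU1 2 3 (6 * ρ + 7)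
      (by omega) (by omega) (by omega)
    simp only [mem_del, mem_singleton, mem_insert, not_or]
    rcases mem_union.1 he with he | he
    · obtain ⟨hne, he1⟩ := mem_erase.1 he
      refine ⟨hNE₁ he1, fun h' => ?_, (hNm e he1).2.2.2.2, fun h' => ?_⟩
      · exact hne (degLE_one_iff.1 hN.1 e he1 e₄ he₄ (h'.trans hp₄.symm))
      · exact hne (degLE_one_iff.1 hN.2 e he1 e₄ he₄ h')
    · refine ⟨hRE₁ he, fun h' => ?_, fun h' => ?_, fun h' => ?_⟩
      · exact hY.rest_left e he (h' ▸ hG.left₂)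
      · exact hY.rest_right e he (h' ▸ hdY)
      · exact hY.rest_right e he (h' ▸ mem_nb_of_mem (hNE he₄) (hp₄ ▸ hG.left₂))

lemma Gadget.acyc {p : ι → β} {q : ι → γ} {ρ : ℕ} {E M MR : Finset ι}
    {Y : Finset β} {k : ℕ} {e₀ e₁ e₂ e₃ : ι} (hG : Gadget p q E Y e₀ e₁ e₂ e₃)
    (hY : Critical p q E M Y MR) (h : Reducible p q ρ E M.card k)
    (hp : DegLE p (ρ + 2) E) (hq : DegLE q (ρ + 2) E) (hM : IsM p q M) (hME : M ⊆ E) :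
    Acyc (Meets p q) (k + 1) E := by
  have hne : e₁ ≠ e₀ := fun h' => hG.ne₁₀ (by rw [h'])
  have hF : ∀ f, f ∈ E.filter (fun f => q f = q e₀ ∧ f ≠ e₀ ∧ p f ≠ p e₁) ↔
      f ∈ E ∧ q f = q e₀ ∧ f ≠ e₀ ∧ p f ≠ p e₁ := fun f => mem_filter
  have hFc := card_star_le hG.mem₀ hG.mem₁ hne hG.right₁ hq hF
  have hcY : q e₀ ∈ nb p q E Y := mem_nb_of_mem hG.mem₀ hG.left₀
  refine acyc_of_star hG.mem₀ (p e₁) hF (fun f hf => h.acyc_del hp hq hM hME ((hF f).1 hf).1)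
    (fun f hf hf1 hf2 => ?_) ?_
  · obtain ⟨N, hNE, hN, hNc, hNm, -⟩ := hG.matchable f hf (Or.inl hf1) hf2
    have hfY : q f ∈ nb p q E Y := mem_nb_of_mem hf (hf1 ▸ hG.left₀)
    obtain ⟨hI1, hI2⟩ := hN.insert (e := e₁) (fun g hg => (hNm g hg).2.2.1)
      (fun g hg => hG.right₁ ▸ (hNm g hg).2.2.2.1)
    obtain ⟨hU1, hU2⟩ := hY.isM_union_rest hI1 (insert_subset hG.mem₁ hNE) fun e he => by
      rcases mem_insert.1 he with rfl | he
      · exact hG.left₁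
      · exact (hNm e he).1
    have hMc := hY.card_rest
    refine h.acyc_del_sdiff hp hq (filter_subset _ _) hFc hf (fun h' => hf2 ((hF f).1 h').2.1) hU1
      (fun g hg => ?_) (by omega)
    rcases mem_union.1 hg with hg | hg
    · rcases mem_insert.1 hg with rfl | hg
      · refine ⟨hG.mem₁, fun h' => ((hF _).1 h').2.2.2 rfl, ?_, ?_⟩
        · rw [hf1]; exact hG.ne₁₀
        · rw [hG.right₁]; exact hf2.symm
      · have := hNm g hg
        refine ⟨hNE hg, fun h' => this.2.2.2.1 ((hF g).1 h').2.1, ?_, this.2.2.2.2⟩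
        rw [hf1]; exact this.2.1
    · refine ⟨hY.rest_subset hg, fun h' => ?_, fun h' => ?_, fun h' => ?_⟩
      · exact hY.rest_right g hg (((hF g).1 h').2.1 ▸ hcY)
      · exact hY.rest_left g hg (by rw [h', hf1]; exact hG.left₀)
      · exact hY.rest_right g hg (h' ▸ hfY)
  · rcases k with _ | k
    · exact acyc_zero _ _
    · exact hG.acyc_inner hY h hp hq

end Large

section Selection
variable {ι β γ : Type*} [Fintype ι] [DecidableEq ι] [DecidableEq β] [DecidableEq γ]

lemma nb_union (p : ι → β) (q : ι → γ) (E : Finset ι) (A B : Finset β) :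
    nb p q E (A ∪ B) = nb p q E A ∪ nb p q E B := by
  ext c
  simp only [mem_union, mem_nb]
  constructor
  · rintro ⟨e, he, h | h, rfl⟩
    exacts [Or.inl ⟨e, he, h, rfl⟩, Or.inr ⟨e, he, h, rfl⟩]
  · rintro (⟨e, he, h, rfl⟩ | ⟨e, he, h, rfl⟩)
    exacts [⟨e, he, Or.inl h, rfl⟩, ⟨e, he, Or.inr h, rfl⟩]

lemma card_nb_union_add (p : ι → β) (q : ι → γ) (E : Finset ι) (A B : Finset β) :
    (nb p q E (A ∪ B)).card + (nb p q E A ∩ nb p q E B).card =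
      (nb p q E A).card + (nb p q E B).card := by
  rw [nb_union, card_union_add_card_inter]

/-- Hall's theorem, producing a matching that saturates `Q` and avoids `T`. -/
lemma exists_isM_of_hall {p : ι → β} {q : ι → γ} {E : Finset ι} {Q : Finset β} {T : Finset γ}
    (h : ∀ Q' ⊆ Q, Q'.card ≤ (nb p q E Q' \ T).card) :
    ∃ N ⊆ E, IsM p q N ∧ N.card = Q.card ∧ (∀ e ∈ N, p e ∈ Q ∧ q e ∉ T) ∧
      ∀ b ∈ Q, ∃ e ∈ N, p e = b := by
  have hall := (Finset.all_card_le_biUnion_card_iff_exists_injective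
    (fun b : Q => nb p q E {b.1} \ T)).1 fun s => by
      have h1 := h (s.map (Function.Embedding.subtype _)) (fun b hb => by
        obtain ⟨b', -, rfl⟩ := mem_map.1 hb
        exact b'.2)
      rw [card_map] at h1
      refine h1.trans (card_le_card fun c hc => ?_)
      obtain ⟨hc, hcT⟩ := mem_sdiff.1 hc
      obtain ⟨e, he, hb, rfl⟩ := mem_nb.1 hc
      obtain ⟨b', hb', hbe⟩ := mem_map.1 hb
      exact mem_biUnion.2 ⟨b', hb', mem_sdiff.2 ⟨mem_nb_of_mem he (by simpa using hbe.symm), hcT⟩⟩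
  obtain ⟨f, hf, hfm⟩ := hall
  have : ∀ b : Q, ∃ e ∈ E, p e = b.1 ∧ q e = f b := fun b => by
    obtain ⟨e, he, h1, h2⟩ := mem_nb.1 (mem_sdiff.1 (hfm b)).1
    exact ⟨e, he, by simpa using h1, h2⟩
  choose g hgE hgp hgq using this
  have hinj : Function.Injective g := fun b b' hbb => Subtype.ext (by rw [← hgp, hbb, hgp])
  refine ⟨univ.image g, ?_, ⟨degLE_one_iff.2 ?_, degLE_one_iff.2 ?_⟩, ?_, ?_, ?_⟩
  · intro e he
    obtain ⟨b, -, rfl⟩ := mem_image.1 he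
    exact hgE b
  · intro e he e' he' hee
    obtain ⟨b, -, rfl⟩ := mem_image.1 he
    obtain ⟨b', -, rfl⟩ := mem_image.1 he'
    rw [hgp, hgp] at hee
    rw [Subtype.ext hee]
  · intro e he e' he' hee
    obtain ⟨b, -, rfl⟩ := mem_image.1 he
    obtain ⟨b', -, rfl⟩ := mem_image.1 he'
    rw [hgq, hgq] at hee
    rw [hf hee]
  · rw [card_image_of_injective _ hinj]
    simp
  · intro e he
    obtain ⟨b, -, rfl⟩ := mem_image.1 he
    rw [hgp, hgq]
    exact ⟨b.2, (mem_sdiff.1 (hfm b)).2⟩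
  · intro b hb
    exact ⟨g ⟨b, hb⟩, by simp, hgp _⟩

/-- A minimal set `Z` of at least two vertices of `Y` with only `|Z| + 1` neighbours. -/
structure MinTight (p : ι → β) (q : ι → γ) (E : Finset ι) (Y Z : Finset β) : Prop where
  ssubset : Z ⊂ Y
  two_le : 2 ≤ Z.card
  card_nb_le : (nb p q E Z).card ≤ Z.card + 1
  lt_card_nb : ∀ Q ⊂ Z, 2 ≤ Q.card → Q.card + 2 ≤ (nb p q E Q).card

lemma Critical.exists_minTight {p : ι → β} {q : ι → γ} {E M MR : Finset ι} {Y : Finset β}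
    (hY : Critical p q E M Y MR) (h3 : 3 ≤ Y.card) : ∃ Z, MinTight p q E Y Z := by
  obtain ⟨y, hy⟩ := hY.nonempty
  have hne : (Y.ssubsets.filter fun Z => 2 ≤ Z.card ∧
      (nb p q E Z).card ≤ Z.card + 1).Nonempty := by
    refine ⟨Y.erase y, mem_filter.2 ⟨mem_ssubsets.2 (erase_ssubset hy), ?_, ?_⟩⟩
    · rw [card_erase_of_mem hy]
      omega
    · have := card_le_card (nb_mono (p := p) (q := q) (E := E) (erase_subset y Y))
      rw [hY.card_nb] at this
      rw [card_erase_of_mem hy]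
      omega
  obtain ⟨Z, hZ, hmin⟩ := exists_min_image _ card hne
  obtain ⟨hZY, h2, hc⟩ := mem_filter.1 hZ
  rw [mem_ssubsets] at hZY
  refine ⟨Z, hZY, h2, hc, fun Q hQ hQ2 => ?_⟩
  by_contra hlt
  have := hmin Q (mem_filter.2 ⟨mem_ssubsets.2 (hQ.trans hZY), hQ2, by omega⟩)
  have := card_lt_card hQ
  omega

lemma mem_nb_singleton {p : ι → β} {q : ι → γ} {E : Finset ι} {b : β} {c : γ} :
    c ∈ nb p q E {b} ↔ ∃ e ∈ E, p e = b ∧ q e = c := by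
  simp [mem_nb]

lemma MinTight.exists_edge {p : ι → β} {q : ι → γ} {E M MR : Finset ι} {Y Z : Finset β}
    (hZ : MinTight p q E Y Z) (hY : Critical p q E M Y MR) :
    ∃ c ∈ nb p q E (Y \ Z), ∃ b ∈ Z, c ∈ nb p q E {b} ∧
      ∀ y ∈ Z, y ≠ b → (nb p q E {y}).card ≤ 2 → c ∉ nb p q E {y} := by
  have hZne : Z.Nonempty := card_pos.1 (by have := hZ.two_le; omega)
  have h1 := card_nb_union_add p q E Z (Y \ Z)
  rw [union_sdiff_of_subset hZ.ssubset.1, hY.card_nb] at h1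
  have h2 := hY.lt_card_nb Z hZ.ssubset hZne
  have h3 := hY.lt_card_nb (Y \ Z) (sdiff_ssubset hZ.ssubset.1 hZne)
    (sdiff_nonempty.2 hZ.ssubset.2)
  have h4 := card_sdiff_add_card_eq_card hZ.ssubset.1
  obtain ⟨c₁, hc₁, c₂, hc₂, hcc⟩ := one_lt_card.1
    (show 1 < (nb p q E Z ∩ nb p q E (Y \ Z)).card by omega)
  by_contra hcon
  push Not at hcon
  have key : ∀ c ∈ nb p q E Z ∩ nb p q E (Y \ Z), ∃ y y', y ≠ y' ∧ Z = {y, y'} ∧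
      (nb p q E {y}).card ≤ 2 ∧ (nb p q E {y'}).card ≤ 2 ∧ c ∈ nb p q E {y} ∧
        c ∈ nb p q E {y'} := by
    intro c hc
    obtain ⟨hcZ, hcY⟩ := mem_inter.1 hc
    obtain ⟨e, he, hb, rfl⟩ := mem_nb.1 hcZ
    obtain ⟨y, hy, -, hy2, hyc⟩ := hcon _ hcY (p e) hb (mem_nb_of_mem he (by simp))
    obtain ⟨y', hy', hne, hy2', hyc'⟩ := hcon _ hcY y hy hyc
    refine ⟨y, y', hne.symm, ?_, hy2, hy2', hyc, hyc'⟩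
    by_contra hZne
    have hsub : ({y, y'} : Finset β) ⊆ Z := by simp [insert_subset_iff, hy, hy']
    have h5 := hZ.lt_card_nb {y, y'} (Finset.ssubset_iff_subset_ne.2 ⟨hsub, Ne.symm hZne⟩)
      (by rw [card_pair hne.symm])
    rw [card_pair hne.symm, ← singleton_union] at h5
    have h6 := card_nb_union_add p q E {y} {y'}
    have h7 : 0 < (nb p q E {y} ∩ nb p q E {y'}).card :=
      card_pos.2 ⟨_, mem_inter.2 ⟨hyc, hyc'⟩⟩
    omega
  obtain ⟨y, y', hne, hZy, hy2, hy2', hyc, hyc'⟩ := key c₁ hc₁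
  obtain ⟨z, z', hne', hZz, -, -, hzc, hzc'⟩ := key c₂ hc₂
  have hall : ∀ w ∈ Z, c₂ ∈ nb p q E {w} := by
    rw [hZz]
    simp [hzc, hzc']
  have hsub : ({c₁, c₂} : Finset γ) ⊆ nb p q E {y} ∩ nb p q E {y'} := by
    simp [insert_subset_iff, hyc, hyc', hall y (by simp [hZy]), hall y' (by simp [hZy])]
  have h5 := card_le_card hsub
  rw [card_pair hcc] at h5
  have h6 := card_nb_union_add p q E {y} {y'}
  rw [singleton_union, ← hZy] at h6
  have := hZ.two_le
  omega

lemma MinTight.exists_second {p : ι → β} {q : ι → γ} {E M MR : Finset ι} {Y Z : Finset β}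
    (hZ : MinTight p q E Y Z) (hY : Critical p q E M Y MR) {b : β} {c : γ} (hb : b ∈ Z) :
    ∃ x ∈ Z, x ≠ b ∧ ∃ d ≠ c, d ∈ nb p q E {x} ∧ (c ∈ nb p q E {x} ∨ d ∈ nb p q E {b}) := by
  have hsing : ∀ x ∈ Z, 2 ≤ (nb p q E {x}).card := fun x hx => by
    have := hY.lt_card_nb {x} ((singleton_subset_iff.2 hx).trans_ssubset hZ.ssubset)
      (singleton_nonempty x)
    simpa using this
  by_cases hx : ∃ x ∈ Z, x ≠ b ∧ c ∈ nb p q E {x}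
  · obtain ⟨x, hx, hxb, hc⟩ := hx
    obtain ⟨d, hd, hdc⟩ := exists_mem_ne (hsing x hx) c
    exact ⟨x, hx, hxb, d, hdc, hd, Or.inl hc⟩
  · push Not at hx
    have h1 := card_nb_union_add p q E {b} (Z.erase b)
    rw [singleton_union, insert_erase hb] at h1
    have h2 := hsing b hb
    have hc := card_erase_of_mem hb
    have h2' := hZ.two_le
    have h3 := hY.lt_card_nb (Z.erase b) ((erase_subset _ _).trans_ssubset hZ.ssubset)
      (card_pos.1 (by omega))
    have h4 := hZ.card_nb_le
    obtain ⟨d, hd⟩ := card_pos.1 (show 0 < (nb p q E {b} ∩ nb p q E (Z.erase b)).card by omega)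
    obtain ⟨hdb, hd⟩ := mem_inter.1 hd
    obtain ⟨e, he, hpe, rfl⟩ := mem_nb.1 hd
    obtain ⟨hpb, hpZ⟩ := mem_erase.1 hpe
    have hdx : q e ∈ nb p q E {p e} := mem_nb_of_mem he (by simp)
    exact ⟨p e, hpZ, hpb, q e, fun h => hx _ hpZ hpb (h ▸ hdx), hdx, Or.inr hdb⟩

lemma MinTight.card_le_card_nb_sdiff {p : ι → β} {q : ι → γ} {E M MR : Finset ι}
    {Y Z : Finset β} (hZ : MinTight p q E Y Z) (hY : Critical p q E M Y MR) {b b'' : β} {c c' : γ}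
    (hb : b ∈ Z) (hbY : b'' ∈ Y \ Z) (hcb : c ∈ nb p q E {b}) (hc' : c' ∈ nb p q E Z)
    (hcc : c' ≠ c) (hstar : ∀ y ∈ Z, y ≠ b → (nb p q E {y}).card ≤ 2 → c ∉ nb p q E {y})
    {Q : Finset β} (hQ : Q ⊆ Y \ {b, b''}) : Q.card ≤ (nb p q E Q \ {c, c'}).card := by
  by_contra hlt
  have hQne : Q.Nonempty := card_pos.1 (by omega)
  have hQb : b ∉ Q := fun h => by simpa using hQ h
  have hQb'' : b'' ∉ Q := fun h => by simpa using hQ h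
  obtain ⟨hbY, hbZ⟩ := mem_sdiff.1 hbY
  have hQY : Q ⊂ Y := Finset.ssubset_iff_subset_ne.2 ⟨hQ.trans sdiff_subset,
    fun h => hQb'' (h ▸ hbY)⟩
  have hUY : Q ∪ Z ⊂ Y := Finset.ssubset_iff_subset_ne.2 ⟨union_subset hQY.1 hZ.ssubset.1,
    fun h => (mem_union.1 (h ▸ hbY : b'' ∈ Q ∪ Z)).elim hQb'' hbZ⟩
  have hcZ : c ∈ nb p q E Z := nb_mono (singleton_subset_iff.2 hb) hcb
  have h1 := hY.lt_card_nb Q hQY hQne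
  have h2 := card_sdiff_add_card_inter (nb p q E Q) {c, c'}
  have hpair : ({c, c'} : Finset γ).card = 2 := card_pair hcc.symm
  have h3 := card_le_card (inter_subset_right (s₁ := nb p q E Q) (s₂ := {c, c'}))
  have h4 : nb p q E Q ∩ {c, c'} = {c, c'} :=
    eq_of_subset_of_card_le inter_subset_right (by omega)
  have hsub : ({c, c'} : Finset γ) ⊆ nb p q E Q := inter_eq_right.1 h4
  have hsub' : ({c, c'} : Finset γ) ⊆ nb p q E Q ∩ nb p q E Z :=
    subset_inter hsub (by simp [insert_subset_iff, hcZ, hc'])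
  have h5 := card_nb_union_add p q E Q Z
  have h6 := hY.lt_card_nb (Q ∪ Z) hUY (hQne.mono subset_union_left)
  have h7 := card_union_add_card_inter Q Z
  have h8 := card_le_card hsub'
  have h9 := hZ.card_nb_le
  have hne : (Q ∩ Z).Nonempty := card_pos.1 (by omega)
  have hss : Q ∩ Z ⊂ Z := Finset.ssubset_iff_subset_ne.2 ⟨inter_subset_right, fun h =>
    hQb (mem_inter.1 (h.symm.subset hb)).1⟩
  have h10 := hY.lt_card_nb (Q ∩ Z) (hss.trans hZ.ssubset) hne
  have h11 : nb p q E (Q ∩ Z) = nb p q E Q ∩ nb p q E Z :=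
    eq_of_subset_of_card_le (subset_inter (nb_mono inter_subset_left) (nb_mono inter_subset_right))
      (by omega)
  have h12 : ¬ 2 ≤ (Q ∩ Z).card := fun h => by
    have := hZ.lt_card_nb (Q ∩ Z) hss h
    rw [h11] at this
    omega
  obtain ⟨y, hy⟩ := card_eq_one.1 (show (Q ∩ Z).card = 1 by have := card_pos.2 hne; omega)
  have hyQ : y ∈ Q ∩ Z := by simp [hy]
  rw [hy] at h11
  refine hstar y (mem_inter.1 hyQ).2 (fun h => hQb (h ▸ (mem_inter.1 hyQ).1)) ?_ ?_
  · rw [h11]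
    omega
  · rw [h11]
    exact hsub' (by simp)

lemma Critical.exists_gadget {p : ι → β} {q : ι → γ} {E M MR : Finset ι} {Y : Finset β}
    (hY : Critical p q E M Y MR) (h3 : 3 ≤ Y.card) :
    ∃ e₀ e₁ e₂ e₃, Gadget p q E Y e₀ e₁ e₂ e₃ := by
  obtain ⟨Z, hZ⟩ := hY.exists_minTight h3
  obtain ⟨c, hcY, b, hb, hcb, hstar⟩ := hZ.exists_edge hY
  obtain ⟨x, hx, hxb, d, hdc, hdx, hextra⟩ := hZ.exists_second hY (c := c) hb
  obtain ⟨e₁, he₁, hb'', hq₁⟩ := mem_nb.1 hcY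
  obtain ⟨e₀, he₀, hp₀, hq₀⟩ := mem_nb_singleton.1 hcb
  obtain ⟨e₂, he₂, hp₂, hq₂⟩ := mem_nb_singleton.1 hdx
  obtain ⟨hb''Y, hb''Z⟩ := mem_sdiff.1 hb''
  have h₃ : ∃ e₃ ∈ E, (p e₃ = p e₂ ∧ q e₃ = q e₀) ∨ (p e₃ = p e₀ ∧ q e₃ = q e₂) := by
    rcases hextra with h | h
    · obtain ⟨e, he, h1, h2⟩ := mem_nb_singleton.1 h
      exact ⟨e, he, Or.inl ⟨h1.trans hp₂.symm, h2.trans hq₀.symm⟩⟩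
    · obtain ⟨e, he, h1, h2⟩ := mem_nb_singleton.1 h
      exact ⟨e, he, Or.inr ⟨h1.trans hp₀.symm, h2.trans hq₂.symm⟩⟩
  obtain ⟨e₃, he₃, h₃⟩ := h₃
  subst hp₀ hq₀ hp₂ hq₂
  refine ⟨e₀, e₁, e₂, e₃, he₀, he₁, he₂, he₃, hZ.ssubset.1 hb, hb''Y, hZ.ssubset.1 hx,
    fun h => hb''Z (h ▸ hb), hxb, fun h => hb''Z (h ▸ hx), hq₁, hdc, h₃, fun f hf hpf hqf => ?_⟩
  have hfZ : q f ∈ nb p q E Z := mem_nb_of_mem hf (by rcases hpf with h | h <;> rwa [h])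
  obtain ⟨N, hNE, hN, hNc, hNm, hNQ⟩ := exists_isM_of_hall (Q := Y \ {p e₀, p e₁})
    (T := {q e₀, q f}) fun Q hQ => hZ.card_le_card_nb_sdiff hY hb hb'' hcb hfZ hqf hstar hQ
  refine ⟨N, hNE, hN, ?_, fun e he => ?_, hNQ (p e₂) ?_⟩
  · have h1 := card_sdiff_add_card_eq_card (s := {p e₀, p e₁}) (t := Y)
      (by simp [insert_subset_iff, hb''Y, hZ.ssubset.1 hb])
    rw [card_pair fun h : p e₀ = p e₁ => hb''Z (h ▸ hb)] at h1
    omega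
  · have := hNm e he
    simp only [mem_sdiff, mem_insert, mem_singleton, not_or] at this
    tauto
  · simp only [mem_sdiff, mem_insert, mem_singleton, not_or]
    exact ⟨hZ.ssubset.1 hx, hxb, fun h => hb''Z (h ▸ hx)⟩

end Selection

section Main
variable {ι β γ : Type*} [Fintype ι] [DecidableEq ι] [DecidableEq β] [DecidableEq γ]

lemma filter_eq_of_card_le {p : ι → β} {r : ℕ} {E E' : Finset ι} (hE : E' ⊆ E) (hp : DegLE p r E)
    {b : β} (hb : (E'.filter fun e => p e = b).card = r) :
    (E.filter fun e => p e = b) = E'.filter fun e => p e = b :=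
  (eq_of_subset_of_card_le (filter_subset_filter _ hE) ((hp b).trans hb.ge)).symm

lemma IsC4.mono {p : ι → β} {q : ι → γ} {r : ℕ} {E E' : Finset ι} {b b' : β} {c c' : γ}
    (h : IsC4 p q r E' b b' c c') (hE : E' ⊆ E) (hp : DegLE p r E) (hq : DegLE q r E) :
    IsC4 p q r E b b' c c' := by
  obtain ⟨hb, hc, hcl, ⟨⟨e₁, h₁, h₁'⟩, ⟨e₂, h₂, h₂'⟩, ⟨e₃, h₃, h₃'⟩, e₄, h₄, h₄'⟩, d₁, d₂, d₃, d₄⟩ := h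
  have f₁ := filter_eq_of_card_le hE hp d₁
  have f₂ := filter_eq_of_card_le hE hp d₂
  have f₃ := filter_eq_of_card_le hE hq d₃
  have f₄ := filter_eq_of_card_le hE hq d₄
  refine ⟨hb, hc, fun e he h => ?_, ⟨⟨e₁, hE h₁, h₁'⟩, ⟨e₂, hE h₂, h₂'⟩, ⟨e₃, hE h₃, h₃'⟩, e₄, hE h₄,
    h₄'⟩, by rw [f₁, d₁], by rw [f₂, d₂], by rw [f₃, d₃], by rw [f₄, d₄]⟩
  refine hcl e ?_ h
  rcases h with h | h | h | h
  · exact (mem_filter.1 (f₁.subset (mem_filter.2 ⟨he, h⟩))).1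
  · exact (mem_filter.1 (f₂.subset (mem_filter.2 ⟨he, h⟩))).1
  · exact (mem_filter.1 (f₃.subset (mem_filter.2 ⟨he, h⟩))).1
  · exact (mem_filter.1 (f₄.subset (mem_filter.2 ⟨he, h⟩))).1

open Classical in
/-- The vertices on the side of `p` lying in a component that is an `r`-regular `C₄`. -/
noncomputable def c4Left (p : ι → β) (q : ι → γ) (r : ℕ) (E : Finset ι) : Finset β :=
  (E.image p).filter fun b => ∃ b' c c', IsC4 p q r E b b' c c'

lemma mem_c4Left {p : ι → β} {q : ι → γ} {r : ℕ} {E : Finset ι} {b : β} :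
    b ∈ c4Left p q r E ↔ ∃ b' c c', IsC4 p q r E b b' c c' := by
  classical
  rw [c4Left, mem_filter, and_iff_right_iff_imp]
  rintro ⟨b', c, c', -, -, -, ⟨⟨e, he, rfl, -⟩, -⟩, -⟩
  exact mem_image_of_mem _ he

lemma c4Left_mono {p : ι → β} {q : ι → γ} {r : ℕ} {E E' : Finset ι} (hE : E' ⊆ E)
    (hp : DegLE p r E) (hq : DegLE q r E) : c4Left p q r E' ⊆ c4Left p q r E := fun b hb => by
  obtain ⟨b', c, c', h⟩ := mem_c4Left.1 hb
  exact mem_c4Left.2 ⟨b', c, c', h.mono hE hp hq⟩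

lemma IsC4.symm {p : ι → β} {q : ι → γ} {r : ℕ} {E : Finset ι} {b b' : β} {c c' : γ}
    (h : IsC4 p q r E b b' c c') : IsC4 p q r E b' b c c' := by
  obtain ⟨hb, hc, hcl, ⟨h₁, h₂, h₃, h₄⟩, d₁, d₂, d₃, d₄⟩ := h
  refine ⟨hb.symm, hc, fun e he h => ?_, ⟨h₃, h₄, h₁, h₂⟩, d₂, d₁, d₃, d₄⟩
  have := hcl e he
  tauto

lemma IsC4.card_del {p : ι → β} {q : ι → γ} {r : ℕ} {E : Finset ι} {b b' : β} {c c' : γ}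
    (h : IsC4 p q r E b b' c c') : E.card = (del p q E {b, b'} {c}).card + 2 * r := by
  obtain ⟨hb, hc, hcl, -, d₁, d₂, -, -⟩ := h
  have h1 : del p q E {b, b'} {c} = E.filter fun e => ¬ (p e = b ∨ p e = b') := by
    refine filter_congr fun e he => ?_
    have := hcl e he
    simp only [mem_insert, mem_singleton]
    tauto
  have h2 : (E.filter fun e => p e = b ∨ p e = b').card = 2 * r := by
    rw [filter_or, card_union_of_disjoint, d₁, d₂, two_mul]
    exact disjoint_filter.2 fun e _ h h' => hb (h.symm.trans h')
  rw [h1, ← h2, add_comm, card_filter_add_card_filter_not]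

lemma IsC4.card_c4Left_del {p : ι → β} {q : ι → γ} {r : ℕ} {E : Finset ι} {b b' : β} {c c' : γ}
    (h : IsC4 p q r E b b' c c') (hp : DegLE p r E) (hq : DegLE q r E) :
    (c4Left p q r (del p q E {b, b'} {c})).card + 2 ≤ (c4Left p q r E).card := by
  have hdis : Disjoint (c4Left p q r (del p q E {b, b'} {c})) {b, b'} := by
    refine disjoint_left.2 fun x hx hx' => ?_
    obtain ⟨b', c, c', -, -, -, ⟨⟨e, he, rfl, -⟩, -⟩, -⟩ := mem_c4Left.1 hx
    exact (mem_del.1 he).2.1 hx'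
  rw [← card_pair h.1, ← card_union_of_disjoint hdis]
  refine card_le_card (union_subset (c4Left_mono (del_subset _ _ _ _ _) hp hq) ?_)
  simp only [insert_subset_iff, singleton_subset_iff]
  exact ⟨mem_c4Left.2 ⟨_, _, _, h⟩, mem_c4Left.2 ⟨_, _, _, h.symm⟩⟩

lemma exists_critical {p : ι → β} {q : ι → γ} {E M : Finset ι} (hM : IsM p q M) (hME : M ⊆ E)
    (hE : E.Nonempty) (hp : ∀ e ∈ E, ∃ f ∈ M, p f = p e) (hq : ∀ e ∈ E, ∃ f ∈ M, q f = q e) :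
    ∃ Y MR, Critical p q E M Y MR := by
  have hMp := degLE_one_iff.1 hM.1
  have hMq := degLE_one_iff.1 hM.2
  have hcardp : ∀ Q ⊆ E.image p, (M.filter fun e => p e ∈ Q).card = Q.card := by
    intro Q hQ
    rw [← card_image_of_injOn (f := p) (s := M.filter fun e => p e ∈ Q)
      fun e he f hf => hMp e (mem_filter.1 he).1 f (mem_filter.1 hf).1]
    congr 1
    ext b
    simp only [mem_image, mem_filter]
    constructor
    · rintro ⟨e, ⟨-, h⟩, rfl⟩
      exact h
    · intro hb
      obtain ⟨e, he, rfl⟩ := mem_image.1 (hQ hb)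
      obtain ⟨f, hf, hfe⟩ := hp e he
      exact ⟨f, ⟨hf, hfe ▸ hb⟩, hfe⟩
  have hcardq : ∀ Q : Finset β, ((M.filter fun e => p e ∈ Q).image q).card =
      (M.filter fun e => p e ∈ Q).card := fun Q =>
    card_image_of_injOn fun e he f hf => hMq e (mem_filter.1 he).1 f (mem_filter.1 hf).1
  have hsub : ∀ Q : Finset β, (M.filter fun e => p e ∈ Q).image q ⊆ nb p q E Q := fun Q =>
    image_subset_image (filter_subset_filter _ hME)
  have hall : (nb p q E (E.image p)).card ≤ (E.image p).card := by
    rw [← hcardp _ subset_rfl, ← hcardq]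
    refine card_le_card fun c hc => ?_
    obtain ⟨e, he, -, rfl⟩ := mem_nb.1 hc
    obtain ⟨f, hf, hfe⟩ := hq e he
    exact mem_image.2 ⟨f, mem_filter.2 ⟨hf, mem_image_of_mem _ (hME hf)⟩, hfe⟩
  obtain ⟨Y, hY, hmin⟩ := exists_min_image ((E.image p).powerset.filter fun Q =>
    Q.Nonempty ∧ (nb p q E Q).card ≤ Q.card) card
    ⟨E.image p, mem_filter.2 ⟨mem_powerset.2 subset_rfl, hE.image p, hall⟩⟩
  obtain ⟨hYE, hYne, hYc⟩ := mem_filter.1 hY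
  rw [mem_powerset] at hYE
  have hYnb : (M.filter fun e => p e ∈ Y).image q = nb p q E Y :=
    eq_of_subset_of_card_le (hsub Y) (by rw [hcardq, hcardp Y hYE]; exact hYc)
  refine ⟨Y, M.filter fun e => p e ∉ Y, hYne, ?_, fun Q hQ hQne => ?_,
    (filter_subset _ _).trans hME, hM.mono (filter_subset _ _), fun e he => (mem_filter.1 he).2,
    fun e he hqe => ?_, ?_⟩
  · rw [← hYnb, hcardq, hcardp Y hYE]
  · by_contra hlt
    have := hmin Q (mem_filter.2 ⟨mem_powerset.2 (hQ.1.trans hYE), hQne, by omega⟩)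
    have := card_lt_card hQ
    omega
  · obtain ⟨heM, hpe⟩ := mem_filter.1 he
    rw [← hYnb] at hqe
    obtain ⟨f, hf, hfe⟩ := mem_image.1 hqe
    obtain ⟨hfM, hpf⟩ := mem_filter.1 hf
    exact hpe (hMq f hfM e heM hfe ▸ hpf)
  · rw [← hcardp Y hYE, add_comm, card_filter_add_card_filter_not]

theorem acyc_of_lt {p : ι → β} {q : ι → γ} {ρ : ℕ} (E : Finset ι) :
    ∀ {M : Finset ι} {k : ℕ}, DegLE p (ρ + 2) E → DegLE q (ρ + 2) E → M ⊆ E → IsM p q M →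
      2 * (6 * ρ + 5) * k + (c4Left p q (ρ + 2) E).card < 2 * (2 * ρ + 1) * M.card + 2 * E.card →
      Acyc (Meets p q) (k + 1) E := by
  induction E using Finset.strongInduction with
  | H E ih =>
  classical
  intro M₀ k hp hq hM₀E hM₀ hlt₀
  obtain ⟨M, hMm, hmax⟩ := exists_max_image (E.powerset.filter fun M => IsM p q M) card
    ⟨M₀, mem_filter.2 ⟨mem_powerset.2 hM₀E, hM₀⟩⟩
  obtain ⟨hME, hM⟩ := mem_filter.1 hMm
  rw [mem_powerset] at hME
  replace hmax : ∀ M' ⊆ E, IsM p q M' → M'.card ≤ M.card := fun M' h1 h2 =>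
    hmax M' (mem_filter.2 ⟨mem_powerset.2 h1, h2⟩)
  have hlt : 2 * (6 * ρ + 5) * k + (c4Left p q (ρ + 2) E).card <
      2 * (2 * ρ + 1) * M.card + 2 * E.card := by
    have := Nat.mul_le_mul_left (2 * (2 * ρ + 1)) (hmax M₀ hM₀E hM₀)
    omega
  have hred : Reducible p q ρ E M.card k := by
    intro E' hE' M' hM'E hM' j a w ha hw hj
    rcases Nat.lt_or_ge k j with hkj | hkj
    · rw [show k + 1 - j = 0 by omega]
      exact acyc_zero _ _
    · obtain ⟨l, rfl⟩ := Nat.exists_eq_add_of_le hkj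
      rw [show j + l + 1 - j = l + 1 by omega]
      refine ih E' hE' (hp.mono hE'.1) (hq.mono hE'.1) hM'E hM' ?_
      have h1 := card_le_card (c4Left_mono hE'.1 hp hq)
      have h2 := Nat.mul_le_mul_left (2 * (2 * ρ + 1)) ha
      nlinarith
  have hE : E.Nonempty := by
    rw [nonempty_iff_ne_empty]
    rintro rfl
    rw [subset_empty.1 hME] at hlt
    simp at hlt
  by_cases hcq : ∃ e ∈ E, ∀ f ∈ M, q f ≠ q e
  · obtain ⟨e, he, heM⟩ := hcq
    exact acyc_of_uncovered hred hp hq hM hME hmax he heM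
  by_cases hcp : ∃ e ∈ E, ∀ f ∈ M, p f ≠ p e
  · obtain ⟨e, he, heM⟩ := hcp
    rw [meets_swap]
    exact acyc_of_uncovered hred.swap hq hp hM.symm hME (fun M' h1 h2 => hmax M' h1 h2.symm) he heM
  push Not at hcp hcq
  obtain ⟨Y, MR, hY⟩ := exists_critical hM hME hE hcp hcq
  have hYpos := card_pos.2 hY.nonempty
  rcases Nat.lt_or_ge Y.card 3 with h3 | h3
  · rcases (by omega : Y.card = 1 ∨ Y.card = 2) with h1 | h2
    · exact hY.acyc_of_card_eq_one hred hp hq hM hME h1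
    · refine hY.acyc_of_card_eq_two hred hp hq hM hME (fun b b' c c' hC => ?_) h2
      rcases k with - | k
      · exact acyc_zero _ _
      obtain ⟨e, he, hpe, -⟩ := hC.2.2.2.1.1
      have hsub := del_subset p q E {b, b'} {c}
      have hMd : M.card ≤ (M.filter fun e => ¬ (p e = b ∨ p e = b')).card + 2 := by
        rw [← card_filter_add_card_filter_not (s := M) (fun e => p e = b ∨ p e = b'), add_comm,
          filter_or]
        have h1 := hM.1 b
        have h2 := hM.1 b'
        have h3 := card_union_le (M.filter fun e => p e = b) (M.filter fun e => p e = b')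
        omega
      refine ih _ (del_ssubset he (by simp [hpe])) (hp.mono hsub) (hq.mono hsub)
        (M := M.filter fun e => ¬ (p e = b ∨ p e = b')) (fun f hf => ?_)
        (hM.mono (filter_subset _ _)) ?_
      · obtain ⟨hfM, hf⟩ := mem_filter.1 hf
        have := hC.2.2.1 f (hME hfM)
        refine mem_del.2 ⟨hME hfM, by simpa using hf, ?_⟩
        rw [mem_singleton]
        tauto
      · have h1 := hC.card_del
        have h2 := hC.card_c4Left_del hp hq
        have h3 := Nat.mul_le_mul_left (2 * (2 * ρ + 1)) hMd
        nlinarith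
  · obtain ⟨e₀, e₁, e₂, e₃, hG⟩ := hY.exists_gadget h3
    exact hG.acyc hY hred hp hq hM hME

/-- König's theorem for edge counts: a bipartite multigraph with maximum degree at most `r` has a
matching of size at least `|E| / r`. -/
lemma exists_isM_card_le {p : ι → β} {q : ι → γ} {r : ℕ} {E : Finset ι} (hp : DegLE p r E)
    (hq : DegLE q r E) : ∃ M ⊆ E, IsM p q M ∧ E.card ≤ r * M.card := by
  obtain ⟨Q, hQ, hmax⟩ := exists_max_image (E.image p).powerset
    (fun Q => (Q.card : ℤ) - (nb p q E Q).card) ⟨∅, by simp⟩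
  rw [mem_powerset] at hQ
  obtain ⟨N, hNE, hN, hNc, hNm, -⟩ := exists_isM_of_hall (p := p) (q := q) (E := E)
    (Q := E.image p \ Q) (T := nb p q E Q) fun Q' hQ' => by
      have h1 := hmax (Q ∪ Q') (mem_powerset.2 (union_subset hQ (hQ'.trans sdiff_subset)))
      rw [nb_union, ← union_sdiff_self_eq_union (s := nb p q E Q),
        card_union_of_disjoint disjoint_sdiff,
        card_union_of_disjoint (disjoint_sdiff.mono_right hQ')] at h1
      push_cast at h1
      omega
  obtain ⟨L, hLE, hL, hLc, hLm, -⟩ := exists_isM_of_hall (p := q) (q := p)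
    (E := E.filter fun e => p e ∈ Q) (Q := nb p q E Q) (T := ∅) fun W hW => by
      set V := nb q p (E.filter fun e => p e ∈ Q) W with hV
      have hVQ : V ⊆ Q := fun b hb => by
        obtain ⟨e, he, -, rfl⟩ := mem_nb.1 hb
        exact (mem_filter.1 he).2
      have h1 := hmax (Q \ V) (mem_powerset.2 (sdiff_subset.trans hQ))
      have h2 : nb p q E (Q \ V) ⊆ nb p q E Q \ W := fun c hc => by
        obtain ⟨e, he, hb, rfl⟩ := mem_nb.1 hc
        obtain ⟨hb, hbV⟩ := mem_sdiff.1 hb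
        exact mem_sdiff.2 ⟨mem_nb_of_mem he hb, fun h =>
          hbV (mem_nb_of_mem (mem_filter.2 ⟨he, hb⟩) h)⟩
      have h3 := card_le_card h2
      have h4 := card_sdiff_add_card_eq_card hW
      have h5 := card_sdiff_add_card_eq_card hVQ
      rw [sdiff_empty]
      omega
  obtain ⟨hU, hUc⟩ := hN.union (M' := L) hL.symm
    (fun e he f hf h => (mem_sdiff.1 (hNm e he).1).2 (h ▸ (mem_filter.1 (hLE hf)).2))
    (fun e he f hf h => (hNm e he).2 (h ▸ (hLm f hf).1))
  refine ⟨N ∪ L, union_subset hNE (hLE.trans (filter_subset _ _)), hU, ?_⟩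
  have h1 : E ⊆ (E.filter fun e => p e ∈ E.image p \ Q) ∪ E.filter fun e => q e ∈ nb p q E Q := by
    intro e he
    by_cases h : p e ∈ Q
    · exact mem_union_right _ (mem_filter.2 ⟨he, mem_nb_of_mem he h⟩)
    · exact mem_union_left _ (mem_filter.2 ⟨he, mem_sdiff.2 ⟨mem_image_of_mem _ he, h⟩⟩)
  have h2 := (card_le_card h1).trans (card_union_le _ _)
  have h3 := hp.card_filter_mem (E.image p \ Q)
  have h4 := hq.card_filter_mem (nb p q E Q)
  rw [hUc, hNc, hLc]
  nlinarith

end Main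

section Assembly
variable {ι α β γ : Type*} [Fintype ι] [DecidableEq ι] [DecidableEq α] [DecidableEq β]
  [DecidableEq γ]

lemma card_le_card_c4Left [Fintype α] {a : ι → α} {p : ι → β} {q : ι → γ} {ρ ν : ℕ}
    (ha : ∀ x, ρ + 2 ≤ (univ.filter fun e => a e = x).card)
    (hp : DegLE p (ρ + 2) univ) (hq : DegLE q (ρ + 2) univ)
    (hν : ∀ τ : Finset ι, IsM p q τ → Set.InjOn a τ → τ.card ≤ ν) :
    (6 * ρ + 6) * Fintype.card α ≤
      (c4Left p q (ρ + 2) univ).card + 2 * (6 * ρ + 5) * ν := by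
  rcases Nat.lt_or_ge ν (Fintype.card α) with hlt | hge
  swap
  · nlinarith [Nat.mul_le_mul_left (2 * (6 * ρ + 5)) hge]
  obtain ⟨d, hd⟩ := Nat.exists_eq_add_of_lt hlt
  have hS : ∃ S : Finset α,
      ¬ Acyc (Meets p q) (S.card - d) (univ.filter fun e => a e ∈ S) := by
    by_contra! hcon
    obtain ⟨τ, hτ, hinj, hc⟩ :=
      exists_independent_partial_transversal (meets_symm p q) (meets_refl p q) d hcon
    have := hν τ ⟨degLE_one_iff.2 fun e he f hf hef => ?_,
      degLE_one_iff.2 fun e he f hf hef => ?_⟩ hinj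
    · omega
    · by_contra hne
      exact hτ e he f hf hne (Or.inl hef)
    · by_contra hne
      exact hτ e he f hf hne (Or.inr hef)
  obtain ⟨S, hS⟩ := hS
  have hdS : d < S.card := by
    by_contra! hle
    rw [Nat.sub_eq_zero_of_le hle] at hS
    exact hS (acyc_zero _ _)
  obtain ⟨m, hm⟩ := Nat.exists_eq_add_of_lt hdS
  rw [show S.card - d = m + 1 by omega] at hS
  set E := univ.filter fun e => a e ∈ S with hE
  obtain ⟨M, hME, hM, hMc⟩ := exists_isM_card_le (hp.mono (subset_univ E)) (hq.mono (subset_univ E))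
  have hEc : (ρ + 2) * S.card ≤ E.card := by
    refine mul_card_image_le_card_of_maps_to (f := a) (s := E) (t := S) (fun e he => (mem_filter.1 he).2) (ρ + 2)
      fun x hx => ?_
    refine (ha x).trans (card_le_card fun e he => ?_)
    simp only [hE, mem_filter, mem_univ, true_and] at he ⊢
    exact ⟨he ▸ hx, he⟩
  have hSM : S.card ≤ M.card :=
    Nat.le_of_mul_le_mul_left (by linarith) (show 0 < ρ + 2 by omega)
  have hle : 2 * (2 * ρ + 1) * M.card + 2 * E.card ≤
      2 * (6 * ρ + 5) * m + (c4Left p q (ρ + 2) E).card := by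
    by_contra! hlt
    exact hS (acyc_of_lt E (hp.mono (subset_univ E)) (hq.mono (subset_univ E)) hME hM hlt)
  have hmono := card_le_card (c4Left_mono (subset_univ E) hp hq)
  have hSn := card_le_univ S
  have h1 := Nat.mul_le_mul_left (2 * (2 * ρ + 1)) hSM
  obtain ⟨t, ht⟩ := Nat.exists_eq_add_of_le hSn
  nlinarith

lemma IsC4.left_mem_of_meet {p : ι → β} {q : ι → γ} {r : ℕ} {E : Finset ι} {b b' x x' : β}
    {c c' y y' : γ} (h : IsC4 p q r E b b' c c') (h' : IsC4 p q r E x x' y y')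
    (hm : (b' = x ∨ b' = x') ∨ (c = y ∨ c = y') ∨ (c' = y ∨ c' = y')) : b = x ∨ b = x' := by
  obtain ⟨-, -, -, ⟨⟨e₁, he₁, hb₁, hc₁⟩, ⟨e₂, he₂, hb₂, hc₂⟩, ⟨e₃, he₃, hb₃, hc₃⟩, -⟩, -⟩ := h
  have hcl := h'.2.2.1
  have key : c = y ∨ c = y' → b = x ∨ b = x' := fun hc =>
    hb₁ ▸ (hcl e₁ he₁ (by rw [hc₁]; tauto)).1
  rcases hm with hm | hm | hm
  · exact key (hc₃ ▸ (hcl e₃ he₃ (by rw [hb₃]; tauto)).2)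
  · exact key hm
  · exact hb₂ ▸ (hcl e₂ he₂ (by rw [hc₂]; tauto)).1

lemma exists_disjoint_c4 (p : ι → β) (q : ι → γ) (r : ℕ) (E : Finset ι) :
    ∃ T : Finset (β × β × γ × γ),
      (∀ t ∈ T, IsC4 p q r E t.1 t.2.1 t.2.2.1 t.2.2.2) ∧
      (∀ t ∈ T, ∀ t' ∈ T, t ≠ t' →
        ({t.1, t.2.1} : Finset β) ∩ {t'.1, t'.2.1} = ∅ ∧
        ({t.2.2.1, t.2.2.2} : Finset γ) ∩ {t'.2.2.1, t'.2.2.2} = ∅) ∧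
      (c4Left p q r E).card ≤ 2 * T.card := by
  classical
  have hex : ∀ b : c4Left p q r E, ∃ t : β × β × γ × γ, t.1 = b ∧
      IsC4 p q r E t.1 t.2.1 t.2.2.1 t.2.2.2 := fun b => by
    obtain ⟨b', c, c', h⟩ := mem_c4Left.1 b.2
    exact ⟨(b, b', c, c'), rfl, h⟩
  choose g hg hgC using hex
  obtain ⟨T, hT, hmax⟩ := exists_max_image ((univ.image g).powerset.filter fun T =>
    ∀ t ∈ T, ∀ t' ∈ T, t ≠ t' →
        ({t.1, t.2.1} : Finset β) ∩ {t'.1, t'.2.1} = ∅ ∧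
        ({t.2.2.1, t.2.2.2} : Finset γ) ∩ {t'.2.2.1, t'.2.2.2} = ∅) card ⟨∅, by simp⟩
  obtain ⟨hTg, hTd⟩ := mem_filter.1 hT
  rw [mem_powerset] at hTg
  have hTC : ∀ t ∈ T, IsC4 p q r E t.1 t.2.1 t.2.2.1 t.2.2.2 := fun t ht => by
    obtain ⟨b, -, rfl⟩ := mem_image.1 (hTg ht)
    exact hgC b
  refine ⟨T, hTC, hTd, ?_⟩
  have hcover : c4Left p q r E ⊆ T.biUnion fun t => {t.1, t.2.1} := by
    intro b hb
    by_contra hcon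
    simp only [mem_biUnion, mem_insert, mem_singleton, not_exists, not_and] at hcon
    set s := g ⟨b, hb⟩ with hs
    have hsb : s.1 = b := hg ⟨b, hb⟩
    have hsC : IsC4 p q r E s.1 s.2.1 s.2.2.1 s.2.2.2 := hgC ⟨b, hb⟩
    have hsT : s ∉ T := fun h => hcon s h (Or.inl hsb.symm)
    have hd : ∀ t ∈ T, ({s.1, s.2.1} : Finset β) ∩ {t.1, t.2.1} = ∅ ∧
        ({s.2.2.1, s.2.2.2} : Finset γ) ∩ {t.2.2.1, t.2.2.2} = ∅ := by
      intro t ht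
      have h1 := hcon t ht
      rw [← hsb] at h1
      have h2 := mt (hsC.left_mem_of_meet (hTC t ht)) h1
      push Not at h2
      push Not at h1
      constructor
      · ext x
        simp only [mem_inter, mem_insert, mem_singleton, notMem_empty, iff_false]
        rintro ⟨rfl | rfl, h⟩ <;> tauto
      · ext x
        simp only [mem_inter, mem_insert, mem_singleton, notMem_empty, iff_false]
        rintro ⟨rfl | rfl, h⟩ <;> tauto
    have := hmax (insert s T) (mem_filter.2 ⟨mem_powerset.2 (insert_subset
      (mem_image_of_mem _ (mem_univ _)) hTg), ?_⟩)
    · rw [card_insert_of_notMem hsT] at this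
      omega
    · intro t ht t' ht' hne
      rcases mem_insert.1 ht with rfl | ht <;> rcases mem_insert.1 ht' with rfl | ht'
      · exact absurd rfl hne
      · exact hd t' ht'
      · rw [inter_comm, inter_comm {t.2.2.1, t.2.2.2}]
        exact hd t ht
      · exact hTd t ht t' ht' hne
  refine (card_le_card hcover).trans ((card_biUnion_le_card_mul T _ 2 fun t _ => ?_).trans ?_)
  · exact card_le_two
  · rw [mul_comm]

lemma count_map_univ (p : ι → β) (q : ι → γ) (y : β) (z : γ) :
    ((univ : Finset ι).val.map fun e => (p e, q e)).count (y, z) =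
      (univ.filter fun e => p e = y ∧ q e = z).card := by
  rw [Multiset.count_map, ← Finset.filter_val, Finset.card_val]
  congr 1
  ext e
  simp [Prod.ext_iff, eq_comm]

lemma IsC4.isRegC4Component {p : ι → β} {q : ι → γ} {r : ℕ} {b b' : β} {c c' : γ}
    (h : IsC4 p q r univ b b' c c') :
    IsRegC4Component ((univ : Finset ι).val.map fun e => (p e, q e)) r b b' c c' := by
  obtain ⟨hb, hc, hcl, ⟨⟨e₁, -, h₁⟩, ⟨e₂, -, h₂⟩, ⟨e₃, -, h₃⟩, ⟨e₄, -, h₄⟩⟩, d₁, d₂, d₃, d₄⟩ := h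
  refine ⟨hb, hc, (univ.filter fun e => p e = b ∧ q e = c).card,
    (univ.filter fun e => p e = b ∧ q e = c').card,
    (univ.filter fun e => p e = b' ∧ q e = c).card,
    (univ.filter fun e => p e = b' ∧ q e = c').card,
    card_pos.2 ⟨e₁, by simpa using h₁⟩, card_pos.2 ⟨e₂, by simpa using h₂⟩,
    card_pos.2 ⟨e₃, by simpa using h₃⟩, card_pos.2 ⟨e₄, by simpa using h₄⟩, ?_, ?_, ?_, ?_, ?_⟩
  · rw [← d₁, ← card_filter_eq_add hc fun e he h => (hcl e he (by tauto)).2]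
  · rw [← d₂, ← card_filter_eq_add hc fun e he h => (hcl e he (by tauto)).2]
  · rw [← d₃, card_filter_eq_add hb fun e he (h : q e = c) => (hcl e he (by tauto)).1]
    simp only [and_comm]
  · rw [← d₄, card_filter_eq_add hb fun e he (h : q e = c') => (hcl e he (by tauto)).1]
    simp only [and_comm]
  · refine Multiset.ext.2 fun ⟨y, z⟩ => ?_
    simp only [Multiset.count_filter, count_map_univ, Multiset.count_add, Multiset.count_nsmul,
      Multiset.count_singleton, Prod.mk.injEq]
    by_cases hyz : (y = b ∨ y = b') ∧ (z = c ∨ z = c')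
    · obtain ⟨rfl | rfl, rfl | rfl⟩ := hyz <;> simp [hb, hc, hb.symm, hc.symm]
    · have h0 : (if y = b ∨ y = b' ∨ z = c ∨ z = c' then
          (univ.filter fun e => p e = y ∧ q e = z).card else 0) = 0 := by
        split_ifs with hor
        · refine card_eq_zero.2 (filter_eq_empty_iff.2 fun e he h => hyz ?_)
          have := hcl e he (by rw [h.1, h.2]; exact hor)
          rwa [h.1, h.2] at this
        · rfl
      rw [h0]
      have g1 : ¬ (y = b ∧ z = c) := by tauto
      have g2 : ¬ (y = b ∧ z = c') := by tauto
      have g3 : ¬ (y = b' ∧ z = c) := by tauto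
      have g4 : ¬ (y = b' ∧ z = c') := by tauto
      simp [g1, g2, g3, g4]

lemma card_filter_map_univ {δ : Type*} (g : ι → δ) (P : δ → Prop) [DecidablePred P] :
    ((((univ : Finset ι).val.map g).filter P).card) = (univ.filter fun e => P (g e)).card := by
  rw [Multiset.filter_map, Multiset.card_map, ← Finset.card_val, Finset.filter_val]
  rfl

lemma exists_edge_enumeration (H : Multiset (α × β × γ)) :
    ∃ (m : ℕ) (g : Fin m → α × β × γ), H = (univ : Finset (Fin m)).val.map g := by
  induction H using Quotient.inductionOn with
  | h l =>
    refine ⟨l.length, l.get, ?_⟩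
    simp [Fin.univ_val_map]

lemma card_le_matchNum [Fintype α] {g : ι → α × β × γ} {τ : Finset ι}
    (hτ : IsM (fun e => (g e).2.1) (fun e => (g e).2.2) τ)
    (hinj : Set.InjOn (fun e => (g e).1) τ) :
    τ.card ≤ matchNum ((univ : Finset ι).val.map g) := by
  have hp := degLE_one_iff.1 hτ.1
  have hq := degLE_one_iff.1 hτ.2
  refine le_csSup ⟨Fintype.card α, ?_⟩ ⟨τ.image g, ⟨fun e he => ?_, fun e he f hf hne => ?_⟩,
    card_image_of_injOn fun e he f hf h => hinj he hf (congrArg Prod.fst h)⟩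
  · rintro _ ⟨M, hM, rfl⟩
    refine card_le_card_of_injOn (t := univ) Prod.fst (fun _ _ => mem_coe.2 (mem_univ _)) ?_
    intro e he f hf h
    by_contra hne
    exact (hM.2 e he f hf hne).1 h
  · obtain ⟨i, -, rfl⟩ := mem_image.1 he
    exact Multiset.mem_map_of_mem g (mem_univ i)
  · obtain ⟨i, hi, rfl⟩ := mem_image.1 he
    obtain ⟨j, hj, rfl⟩ := mem_image.1 hf
    exact ⟨fun h => hne (congrArg g (hinj hi hj h)), fun h => hne (congrArg g (hp i hi j hj h)),
      fun h => hne (congrArg g (hq i hi j hj h))⟩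

end Assembly

end Auxiliary

/-- If every vertex of the class `α` (of size `n`) has degree at least `r ≥ 2`, every
vertex of the other two classes has degree at most `r`, and `ν(H) ≤ (1 + ε)·n/2`, then
the link of `α` contains at least `(1 − (6r − 7)ε)·n/2` connected components that are
`r`-regular `C₄`'s. -/
theorem stmt4 {α β γ : Type*} [Fintype α]
    [DecidableEq α] [DecidableEq β] [DecidableEq γ]
    (H : Multiset (α × β × γ)) (n r : ℕ) (hr : 2 ≤ r) (ε : ℝ) (hε : 0 ≤ ε)
    (hA : Fintype.card α = n)
    (hdA : ∀ a : α, r ≤ deg1 H a)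
    (hdB : ∀ b : β, deg2 H b ≤ r)
    (hdC : ∀ c : γ, deg3 H c ≤ r)
    (hnu : (matchNum H : ℝ) ≤ (1 + ε) * n / 2) :
    ∃ T : Finset (β × β × γ × γ),
      (∀ t ∈ T, IsRegC4Component (linkA H) r t.1 t.2.1 t.2.2.1 t.2.2.2) ∧
      (∀ t ∈ T, ∀ t' ∈ T, t ≠ t' →
        ({t.1, t.2.1} : Finset β) ∩ {t'.1, t'.2.1} = ∅ ∧
        ({t.2.2.1, t.2.2.2} : Finset γ) ∩ {t'.2.2.1, t'.2.2.2} = ∅) ∧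
      (1 - (6 * (r : ℝ) - 7) * ε) * n / 2 ≤ (T.card : ℝ) := by

  obtain ⟨m, g, rfl⟩ := exists_edge_enumeration H
  obtain ⟨ρ, rfl⟩ := Nat.exists_eq_add_of_le' hr
  have hp : DegLE (fun e => (g e).2.1) (ρ + 2) Finset.univ := fun b => by
    simpa only [deg2, card_filter_map_univ] using hdB b
  have hq : DegLE (fun e => (g e).2.2) (ρ + 2) Finset.univ := fun c => by
    simpa only [deg3, card_filter_map_univ] using hdC c
  have hcard := card_le_card_c4Left (a := fun e => (g e).1)
    (fun x => by simpa only [deg1, card_filter_map_univ] using hdA x) hp hq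
    fun τ hτ hinj => card_le_matchNum hτ hinj
  obtain ⟨T, hTC, hTd, hTc⟩ := exists_disjoint_c4 (fun e => (g e).2.1) (fun e => (g e).2.2)
    (ρ + 2) Finset.univ
  refine ⟨T, fun t ht => ?_, hTd, ?_⟩
  · have := (hTC t ht).isRegC4Component
    rwa [linkA, Multiset.map_map]
  · have h := hcard.trans (Nat.add_le_add_right hTc _)
    rw [hA] at h
    have h' : (6 * (ρ : ℝ) + 6) * n ≤ 2 * T.card +
        2 * (6 * ρ + 5) * matchNum (Finset.univ.val.map g) := by exact_mod_cast h
    have hK : (0 : ℝ) ≤ 2 * (6 * ρ + 5) := by positivity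
    have h1 := mul_le_mul_of_nonneg_left hnu hK
    push_cast
    nlinarith

end Tripartite
end

section
/- Let H be a 3-partite 3-graph, let A be one of its vertex classes, and suppose every vertex in A has degree at most r. If an r-regular C4 in the link lk A does not host two disjoint edges of H, then the edges of H that it hosts form a copy of (r/2)·F, where F is the truncated Fano plane. -/
namespace Hosted

lemma card_filter_eq_add {E : Type*} (S : Finset E) (p q t : E → Prop)
    [DecidablePred p] [DecidablePred q] [DecidablePred t]
    (hiff : ∀ e ∈ S, p e ↔ q e ∨ t e) (hdisj : ∀ e ∈ S, q e → ¬ t e) :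
    (S.filter p).card = (S.filter q).card + (S.filter t).card := by
  classical
  rw [Finset.filter_congr hiff, Finset.filter_or, Finset.card_union_of_disjoint]
  exact Finset.disjoint_filter.2 hdisj

/-- A 3-partite 3-graph is given by an index type `E` of edges (so parallel edges are
allowed) and a map `f` assigning to each edge index its triple of vertices, one in each
of the three vertex classes `α`, `β`, `γ`.

In the link of the first class (the bipartite multigraph on `β` and `γ` whose edges are
the projections of the edges of `H`), a sub-multigraph is a subset `S` of edge indices;
`S` *hosts* exactly the edges of `H` indexed by `S`.

Statement: let every vertex of the class `α` have degree at most `r`, and let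
`S` together with `b b' : β`, `c c' : γ` be an `r`-regular `C₄` in the link of `α`
(all link-edges of `S` join `{b, b'}` to `{c, c'}`, all four sides of the 4-cycle are
present, and each of the four vertices has degree exactly `r` in `S`). If `S` does not
host two disjoint edges of `H`, then the edges hosted by `S` form a copy of `(r/2) • F`,
where `F` is the truncated Fano plane. -/
theorem stmt5 {α β γ E : Type*} [DecidableEq α] [DecidableEq β] [DecidableEq γ]
    [Fintype E] [DecidableEq E]
    (f : E → α × β × γ) (r : ℕ)
    (hdA : ∀ a : α, (Finset.univ.filter fun e => (f e).1 = a).card ≤ r)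
    (S : Finset E) (b b' : β) (c c' : γ)
    (hbb : b ≠ b') (hcc : c ≠ c')
    (hin : ∀ e ∈ S, ((f e).2.1 = b ∨ (f e).2.1 = b') ∧ ((f e).2.2 = c ∨ (f e).2.2 = c'))
    (hside1 : ∃ e ∈ S, (f e).2.1 = b ∧ (f e).2.2 = c)
    (hside2 : ∃ e ∈ S, (f e).2.1 = b ∧ (f e).2.2 = c')
    (hside3 : ∃ e ∈ S, (f e).2.1 = b' ∧ (f e).2.2 = c)
    (hside4 : ∃ e ∈ S, (f e).2.1 = b' ∧ (f e).2.2 = c')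
    (hdb : (S.filter fun e => (f e).2.1 = b).card = r)
    (hdb' : (S.filter fun e => (f e).2.1 = b').card = r)
    (hdc : (S.filter fun e => (f e).2.2 = c).card = r)
    (hdc' : (S.filter fun e => (f e).2.2 = c').card = r)
    (hnodisj : ¬ ∃ e1 ∈ S, ∃ e2 ∈ S,
      (f e1).1 ≠ (f e2).1 ∧ (f e1).2.1 ≠ (f e2).2.1 ∧ (f e1).2.2 ≠ (f e2).2.2) :
    ∃ s : ℕ, 2 * s = r ∧
    ∃ (x1 y1 : α) (x2 y2 : β) (x3 y3 : γ),
      x1 ≠ y1 ∧ x2 ≠ y2 ∧ x3 ≠ y3 ∧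
      (∀ e ∈ S, f e = (x1, x2, x3) ∨ f e = (x1, y2, y3) ∨
        f e = (y1, x2, y3) ∨ f e = (y1, y2, x3)) ∧
      (S.filter fun e => f e = (x1, x2, x3)).card = s ∧
      (S.filter fun e => f e = (x1, y2, y3)).card = s ∧
      (S.filter fun e => f e = (y1, x2, y3)).card = s ∧
      (S.filter fun e => f e = (y1, y2, x3)).card = s := by
  obtain ⟨e1, he1, hb1, hc1⟩ := hside1
  obtain ⟨e2, he2, hb2, hc2⟩ := hside2
  obtain ⟨e3, he3, hb3, hc3⟩ := hside3
  obtain ⟨e4, he4, hb4, hc4⟩ := hside4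
  have same : ∀ e ∈ S, ∀ e' ∈ S, (f e).2.1 ≠ (f e').2.1 → (f e).2.2 ≠ (f e').2.2 →
      (f e).1 = (f e').1 := by
    intro e he e' he' hb hc
    by_contra ha
    exact hnodisj ⟨e, he, e', he', ha, hb, hc⟩
  obtain ⟨x, hx⟩ : ∃ x, (f e1).1 = x := ⟨_, rfl⟩
  obtain ⟨y, hy⟩ : ∃ y, (f e2).1 = y := ⟨_, rfl⟩
  have hx4 : (f e4).1 = x := by grind
  have hy3 : (f e3).1 = y := by grind
  have hall : ∀ e ∈ S, f e = (x, b, c) ∨ f e = (x, b', c') ∨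
      f e = (y, b, c') ∨ f e = (y, b', c) := by
    intro e he
    simp only [Prod.ext_iff]
    rcases hin e he with ⟨hb | hb, hc | hc⟩
    · exact Or.inl ⟨by grind, hb, hc⟩
    · exact Or.inr (Or.inr (Or.inl ⟨by grind, hb, hc⟩))
    · exact Or.inr (Or.inr (Or.inr ⟨by grind, hb, hc⟩))
    · exact Or.inr (Or.inl ⟨by grind, hb, hc⟩)
  have hcb := card_filter_eq_add S (fun e => (f e).2.1 = b)
    (fun e => f e = (x, b, c)) (fun e => f e = (y, b, c')) (by grind) (by grind)
  have hcb' := card_filter_eq_add S (fun e => (f e).2.1 = b')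
    (fun e => f e = (x, b', c')) (fun e => f e = (y, b', c)) (by grind) (by grind)
  have hcc₁ := card_filter_eq_add S (fun e => (f e).2.2 = c)
    (fun e => f e = (x, b, c)) (fun e => f e = (y, b', c)) (by grind) (by grind)
  have hle : ∀ a, (S.filter fun e => (f e).1 = a).card ≤ r := fun a =>
    (Finset.card_le_card (Finset.filter_subset_filter _ (Finset.subset_univ S))).trans (hdA a)
  have hxy : x ≠ y := by
    rintro rfl
    have hcard := card_filter_eq_add S (fun e => (f e).1 = x)
      (fun e => (f e).2.1 = b) (fun e => (f e).2.1 = b') (by grind) (by grind)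
    have hpos : 0 < (S.filter fun e => (f e).2.1 = b).card :=
      Finset.card_pos.2 ⟨e1, Finset.mem_filter.2 ⟨he1, hb1⟩⟩
    have := hle x
    omega
  have hcx := card_filter_eq_add S (fun e => (f e).1 = x)
    (fun e => f e = (x, b, c)) (fun e => f e = (x, b', c')) (by grind) (by grind)
  have hcy := card_filter_eq_add S (fun e => (f e).1 = y)
    (fun e => f e = (y, b, c')) (fun e => f e = (y, b', c)) (by grind) (by grind)
  have hlx := hle x
  have hly := hle y
  exact ⟨(S.filter fun e => f e = (x, b, c)).card, by omega, x, y, b, b', c, c',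
    hxy, hbb, hcc, hall, rfl, by omega, by omega, by omega⟩

end Hosted
end

section
/- Let H be a 3-partite 3-graph with vertex classes V1, V2, V3. Suppose K is an r-regular C4 component of the link of one of the vertex classes, K hosts two disjoint edges of H, and every vertex of K belongs to an r-regular C4 component of the link of each of the other two vertex classes. Then K belongs to a connected component of H that either (1) has exactly 2 vertices in each vertex class and contains a matching of size 2, or (2) has exactly 4 vertices in each vertex class and contains a matching of size 4. In particular, K belongs to a component of H having a perfect matching. -/
namespace Links

variable {V : Fin 3 → Type} {E : Type}

/-- A 3-partite 3-graph is given by the three vertex classes `V 0`, `V 1`, `V 2`, an index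
type `E` of edges (so parallel edges are allowed) and a map `ed` assigning to each edge
index its vertex in each class. The degree of a vertex `v : V i` is the number of edges
containing it. -/
def deg [∀ i, DecidableEq (V i)] [Fintype E] (ed : E → ∀ i, V i) (i : Fin 3) (v : V i) :
    ℕ :=
  (Finset.univ.filter fun e => ed e i = v).card

/-- `b, b' : V j` and `c, c' : V k` are the vertices of a connected component of the link
of the class `V i` (the bipartite multigraph on the other two classes `V j`, `V k` whose
edges are the projections of the edges of `H`) which is an `r`-regular `C₄`: a cycle of
length 4 together with edges parallel to the edges of the cycle, such that every vertex
has degree exactly `r`.  (No edge leaves `{b, b'} ∪ {c, c'}`, all four sides of the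
4-cycle are present, and all four vertices have degree exactly `r`.) -/
def IsC4Comp [∀ i, DecidableEq (V i)] [Fintype E] (ed : E → ∀ i, V i) (r : ℕ)
    (i j k : Fin 3) (b b' : V j) (c c' : V k) : Prop :=
  i ≠ j ∧ i ≠ k ∧ j ≠ k ∧ b ≠ b' ∧ c ≠ c' ∧
  (∀ e : E, (ed e j = b ∨ ed e j = b' ∨ ed e k = c ∨ ed e k = c') →
    (ed e j = b ∨ ed e j = b') ∧ (ed e k = c ∨ ed e k = c')) ∧
  (∃ e : E, ed e j = b ∧ ed e k = c) ∧ (∃ e : E, ed e j = b ∧ ed e k = c') ∧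
  (∃ e : E, ed e j = b' ∧ ed e k = c) ∧ (∃ e : E, ed e j = b' ∧ ed e k = c') ∧
  deg ed j b = r ∧ deg ed j b' = r ∧ deg ed k c = r ∧ deg ed k c' = r

/-- The vertex `v : V l` belongs to a connected component of the link of the class `V m`
which is an `r`-regular `C₄`. -/
def InC4Comp [∀ i, DecidableEq (V i)] [Fintype E] (ed : E → ∀ i, V i) (r : ℕ)
    (m : Fin 3) {l : Fin 3} (v : V l) : Prop :=
  ∃ (k : Fin 3) (b' : V l) (c c' : V k), IsC4Comp ed r m l k v b' c c'

/-- Two vertices of the 3-partite 3-graph (elements of the sigma type `Σ i, V i`) are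
connected if they are joined by a path of edges; `hconn ed x y` says `y` lies in the
connected component of `x`. -/
def hconn (ed : E → ∀ i, V i) : (Σ i, V i) → (Σ i, V i) → Prop :=
  Relation.ReflTransGen fun x y => ∃ e : E, ed e x.1 = x.2 ∧ ed e y.1 = y.2

/-- The cycle and closure conditions in the definition of a `C₄` component, for a bipartite
multigraph given by the two end-vertex maps of its edges. -/
def IsSquare {X Y : Type} (f : E → X) (g : E → Y) (x x' : X) (y y' : Y) : Prop :=
  x ≠ x' ∧ y ≠ y' ∧
  (∀ e, (f e = x ∨ f e = x' ∨ g e = y ∨ g e = y') →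
    (f e = x ∨ f e = x') ∧ (g e = y ∨ g e = y')) ∧
  (∃ e, f e = x ∧ g e = y) ∧ (∃ e, f e = x ∧ g e = y') ∧
  (∃ e, f e = x' ∧ g e = y) ∧ (∃ e, f e = x' ∧ g e = y')

theorem IsC4Comp.isSquare [∀ i, DecidableEq (V i)] [Fintype E] {ed : E → ∀ i, V i} {r : ℕ}
    {i j k : Fin 3} {b b' : V j} {c c' : V k} (h : IsC4Comp ed r i j k b b' c c') :
    IsSquare (fun e => ed e j) (fun e => ed e k) b b' c c' := by
  obtain ⟨-, -, -, hb, hc, hcl, h1, h2, h3, h4, -⟩ := h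
  exact ⟨hb, hc, hcl, h1, h2, h3, h4⟩

theorem InC4Comp.exists_isSquare [∀ i, DecidableEq (V i)] [Fintype E] {ed : E → ∀ i, V i}
    {r : ℕ} {i j k : Fin 3} (hij : i ≠ j) (hik : i ≠ k) (hjk : j ≠ k) {v : V j}
    (h : InC4Comp ed r k v) :
    ∃ (v' : V j) (a a' : V i), IsSquare (fun e => ed e j) (fun e => ed e i) v v' a a' := by
  obtain ⟨l, v', a, a', h⟩ := h
  have hl : l = i := by
    have := h.1
    have := h.2.1
    have := h.2.2.1
    omega
  subst hl
  exact ⟨v', a, a', h.isSquare⟩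

/-- If all vertices of one edge are reachable, so are those of any edge meeting it. -/
theorem hconn_of_common {ed : E → ∀ i, V i} {x : Σ i, V i} {e e' : E} {m : Fin 3}
    (he : ∀ n, hconn ed x ⟨n, ed e n⟩) (hm : ed e' m = ed e m) (n : Fin 3) :
    hconn ed x ⟨n, ed e' n⟩ :=
  (he m).tail ⟨e', hm, rfl⟩

/-- A matching of reachable edges whose vertex set is closed under adjacency is a perfect
matching of the component, and the component has as many vertices in each class as the
matching has edges. -/
theorem component_of_closed_matching {ed : E → ∀ i, V i} {j : Fin 3} {b : V j}
    {M : Finset E}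
    (hdisj : ∀ e1 ∈ M, ∀ e2 ∈ M, e1 ≠ e2 → ∀ m : Fin 3, ed e1 m ≠ ed e2 m)
    (hreach : ∀ e ∈ M, ∀ m : Fin 3, hconn ed ⟨j, b⟩ ⟨m, ed e m⟩)
    (hb : ∃ e ∈ M, ed e j = b)
    (hclosed : ∀ (e : E) (m n : Fin 3), (∃ e' ∈ M, ed e' m = ed e m) →
      ∃ e' ∈ M, ed e' n = ed e n) :
    (∀ x : Σ m, V m, hconn ed ⟨j, b⟩ x → ∃ e ∈ M, ed e x.1 = x.2) ∧
      ∀ m : Fin 3, {v : V m | hconn ed ⟨j, b⟩ ⟨m, v⟩}.ncard = M.card := by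
  have hcover : ∀ x : Σ m, V m, hconn ed ⟨j, b⟩ x → ∃ e ∈ M, ed e x.1 = x.2 := by
    intro x hx
    induction hx with
    | refl => exact hb
    | tail _ hstep ih =>
      obtain ⟨e, h1, h2⟩ := hstep
      rw [← h2]
      exact hclosed e _ _ (by rwa [h1])
  refine ⟨hcover, fun m => ?_⟩
  have himage : {v : V m | hconn ed ⟨j, b⟩ ⟨m, v⟩} = (fun e => ed e m) '' (M : Set E) := by
    ext v
    constructor
    · intro hv
      exact hcover ⟨m, v⟩ hv
    · rintro ⟨e, he, rfl⟩
      exact hreach e he m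
  have hinj : Set.InjOn (fun e => ed e m) (M : Set E) := by
    intro e1 h1 e2 h2 h
    by_contra hne
    exact hdisj e1 h1 e2 h2 hne m h
  rw [himage, hinj.ncard_image, Set.ncard_coe_finset]

section Combinatorics

variable {A B C : Type} {fa : E → A} {fb : E → B} {fc : E → C}

/-- If the links of two classes have square components on a common pair of vertices, then
the vertices of these squares span a union of components of the 3-graph, and any two
disjoint edges there cover it. -/
theorem IsSquare.closed_pair {a a' : A} {b b' : B} {c c' : C}
    (hK : IsSquare fb fc b b' c c') (hL : IsSquare fb fa b b' a a') {e1 e2 : E}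
    (h1 : fb e1 = b ∨ fb e1 = b') (h2 : fb e2 = b ∨ fb e2 = b')
    (ha : fa e1 ≠ fa e2) (hb : fb e1 ≠ fb e2) (hc : fc e1 ≠ fc e2) (e : E)
    (h : (fa e1 = fa e ∨ fa e2 = fa e) ∨ (fb e1 = fb e ∨ fb e2 = fb e) ∨
      (fc e1 = fc e ∨ fc e2 = fc e)) :
    (fa e1 = fa e ∨ fa e2 = fa e) ∧ (fb e1 = fb e ∨ fb e2 = fb e) ∧
      (fc e1 = fc e ∨ fc e2 = fc e) := by
  obtain ⟨-, -, hKc, -⟩ := hK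
  obtain ⟨-, -, hLc, -⟩ := hL
  have := hKc e1
  have := hKc e2
  have := hKc e
  have := hLc e1
  have := hLc e2
  have := hLc e
  grind

/-- When the squares at `b` and `b'`, and those at `c` and `c'`, are different, there are
four edges forming a matching whose vertex set is closed under adjacency; `p` and `q` are
edges linking them together. -/
theorem IsSquare.exists_closed_four {b b' b₁ b₁' : B} {c c' c₁ c₁' : C}
    {x x' y y' z z' w w' : A}
    (hK : IsSquare fb fc b b' c c')
    (hb : IsSquare fb fa b b₁ x x') (hb' : IsSquare fb fa b' b₁' y y')
    (hc : IsSquare fc fa c c₁ z z') (hc' : IsSquare fc fa c' c₁' w w')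
    (hbne : b₁ ≠ b') (hcne : c₁ ≠ c') :
    ∃ e1 e2 e3 e4 p q : E, fb e1 = b ∧ fb p = b ∧ fc q = fc e1 ∧
      fc e2 = fc p ∧ fa e3 = fa p ∧ fa e4 = fa q ∧
      [e1, e2, e3, e4].Pairwise (fun e f => fa e ≠ fa f ∧ fb e ≠ fb f ∧ fc e ≠ fc f) ∧
      ∀ e, ((∃ f ∈ [e1, e2, e3, e4], fa f = fa e) ∨ (∃ f ∈ [e1, e2, e3, e4], fb f = fb e) ∨
          (∃ f ∈ [e1, e2, e3, e4], fc f = fc e)) →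
        (∃ f ∈ [e1, e2, e3, e4], fa f = fa e) ∧ (∃ f ∈ [e1, e2, e3, e4], fb f = fb e) ∧
          (∃ f ∈ [e1, e2, e3, e4], fc f = fc e) := by
  obtain ⟨hbb', hcc', hKc, ⟨e1, h1b, h1c⟩, ⟨p, hpb, hpc⟩, ⟨q, hqb, hqc⟩, ⟨e2, h2b, h2c⟩⟩ := hK
  obtain ⟨hbb₁, hx, hbc, -, -, hbx, hbx'⟩ := hb
  obtain ⟨hbb₁', hy, hbc', -, -, hby, hby'⟩ := hb'
  obtain ⟨hcc₁, hz, hcc, -⟩ := hc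
  obtain ⟨hcc₁', hw, hcc2, -⟩ := hc'
  have hp : fa p ≠ fa e1 := by grind
  have hq : fa q ≠ fa e2 := by grind
  have hxs : ∀ a, (a = x ∨ a = x') ↔ (a = fa e1 ∨ a = fa p) := by grind
  have hys : ∀ a, (a = y ∨ a = y') ↔ (a = fa q ∨ a = fa e2) := by grind
  have hb₁ : b₁' ≠ b ∧ b₁ ≠ b₁' := by grind
  have hxy : fa q ≠ fa e1 ∧ fa q ≠ fa p ∧ fa e2 ≠ fa e1 ∧ fa e2 ≠ fa p := by grind
  have hzs : ∀ a, (a = z ∨ a = z') ↔ (a = fa e1 ∨ a = fa q) := by grind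
  have hws : ∀ a, (a = w ∨ a = w') ↔ (a = fa p ∨ a = fa e2) := by grind
  have hc₁ : c₁' ≠ c ∧ c₁ ≠ c₁' := by grind
  obtain ⟨e3, h3b, h3a⟩ : ∃ e, fb e = b₁ ∧ fa e = fa p := by grind
  obtain ⟨e4, h4b, h4a⟩ : ∃ e, fb e = b₁' ∧ fa e = fa q := by grind
  have hBc : ∀ e, (fb e = b ∨ fb e = b₁ ∨ fa e = fa e1 ∨ fa e = fa p) →
      (fb e = b ∨ fb e = b₁) ∧ (fa e = fa e1 ∨ fa e = fa p) := by grind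
  have hBc' : ∀ e, (fb e = b' ∨ fb e = b₁' ∨ fa e = fa q ∨ fa e = fa e2) →
      (fb e = b' ∨ fb e = b₁') ∧ (fa e = fa q ∨ fa e = fa e2) := by grind
  have hCc : ∀ e, (fc e = c ∨ fc e = c₁ ∨ fa e = fa e1 ∨ fa e = fa q) →
      (fc e = c ∨ fc e = c₁) ∧ (fa e = fa e1 ∨ fa e = fa q) := by grind
  have hCc' : ∀ e, (fc e = c' ∨ fc e = c₁' ∨ fa e = fa p ∨ fa e = fa e2) →
      (fc e = c' ∨ fc e = c₁') ∧ (fa e = fa p ∨ fa e = fa e2) := by grind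
  clear hbc hbc' hcc hcc2 hxs hys hzs hws hbx hbx' hby hby'
  have h3c : fc e3 = c₁' := by grind
  have h4c : fc e4 = c₁ := by grind
  refine ⟨e1, e2, e3, e4, p, q, h1b, hpb, by grind, by grind, h3a, h4a, ?_, fun e he => ?_⟩
  · simp only [List.pairwise_cons, List.mem_cons, List.not_mem_nil, or_false,
      forall_eq_or_imp, forall_eq, h1b, h1c, h2b, h2c, h3a, h3b, h3c, h4a, h4b, h4c]
    grind
  · simp only [List.mem_cons, List.not_mem_nil, or_false, exists_eq_or_imp,
      exists_eq_left, h1b, h1c, h2b, h2c, h3a, h3b, h3c, h4a, h4b, h4c] at he ⊢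
    have := hBc e
    have := hBc' e
    have := hCc e
    have := hCc' e
    grind

end Combinatorics

/-- Suppose `K` (with vertices `b, b' : V j` and `c, c' : V k`) is an `r`-regular `C₄`
component of the link of `V i`, `K` hosts two disjoint edges of `H`, and every vertex of
`K` belongs to an `r`-regular `C₄` component of the link of each of the other two vertex
classes (of which it is a vertex).  Then `K` belongs to a connected component of `H`
which either has exactly 2 vertices in each class and contains a matching of size 2, or
has exactly 4 vertices in each class and contains a matching of size 4; in particular
this component has a perfect matching. -/
theorem stmt6 [∀ i, DecidableEq (V i)] [Fintype E] [DecidableEq E]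
    (ed : E → ∀ i, V i) (r : ℕ) (i j k : Fin 3) (b b' : V j) (c c' : V k)
    (hK : IsC4Comp ed r i j k b b' c c')
    (hhost : ∃ e1 e2 : E,
      (ed e1 j = b ∨ ed e1 j = b') ∧ (ed e1 k = c ∨ ed e1 k = c') ∧
      (ed e2 j = b ∨ ed e2 j = b') ∧ (ed e2 k = c ∨ ed e2 k = c') ∧
      (∀ m : Fin 3, ed e1 m ≠ ed e2 m))
    (hb : InC4Comp ed r k b) (hb' : InC4Comp ed r k b')
    (hc : InC4Comp ed r j c) (hc' : InC4Comp ed r j c') :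
    ∃ M : Finset E,
      (∀ e1 ∈ M, ∀ e2 ∈ M, e1 ≠ e2 → ∀ m : Fin 3, ed e1 m ≠ ed e2 m) ∧
      (∀ e ∈ M, ∀ m : Fin 3, hconn ed ⟨j, b⟩ ⟨m, ed e m⟩) ∧
      (∀ x : Σ m, V m, hconn ed ⟨j, b⟩ x → ∃ e ∈ M, ed e x.1 = x.2) ∧
      ((M.card = 2 ∧ ∀ m : Fin 3, {v : V m | hconn ed ⟨j, b⟩ ⟨m, v⟩}.ncard = 2) ∨
       (M.card = 4 ∧ ∀ m : Fin 3, {v : V m | hconn ed ⟨j, b⟩ ⟨m, v⟩}.ncard = 4)) := by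
  have hij : i ≠ j := hK.1
  have hik : i ≠ k := hK.2.1
  have hjk : j ≠ k := hK.2.2.1
  have hm : ∀ m : Fin 3, m = i ∨ m = j ∨ m = k := by omega
  have hall : ∀ P : Fin 3 → Prop, P i → P j → P k → ∀ m, P m := by
    intro P h1 h2 h3 m
    obtain rfl | rfl | rfl := hm m <;> assumption
  have hsome : ∀ (P : Fin 3 → Prop) (m : Fin 3), P m → P i ∨ P j ∨ P k := by
    intro P m h
    obtain rfl | rfl | rfl := hm m <;> simp [h]
  have hS := hK.isSquare
  obtain ⟨b₁, x, x', hb⟩ := hb.exists_isSquare hij hik hjk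
  obtain ⟨b₁', y, y', hb'⟩ := hb'.exists_isSquare hij hik hjk
  obtain ⟨c₁, z, z', hc⟩ := hc.exists_isSquare hik hij hjk.symm
  obtain ⟨c₁', w, w', hc'⟩ := hc'.exists_isSquare hik hij hjk.symm
  have hbreach : ∀ e, ed e j = b → ∀ m, hconn ed ⟨j, b⟩ ⟨m, ed e m⟩ := fun e he m =>
    Relation.ReflTransGen.single ⟨e, he, rfl⟩
  by_cases hcase : b₁ = b' ∨ c₁ = c'
  · obtain ⟨e1, e2, h1b, h1c, h2b, h2c, hne⟩ := hhost
    have hreach : ∀ e, (ed e k = c ∨ ed e k = c') →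
        ∀ m, hconn ed ⟨j, b⟩ ⟨m, ed e m⟩ := by
      obtain ⟨-, -, -, ⟨p, hpb, hpc⟩, ⟨q, hqb, hqc⟩, -⟩ := hS
      rintro e (he | he)
      · exact hconn_of_common (hbreach p hpb) (he.trans hpc.symm)
      · exact hconn_of_common (hbreach q hqb) (he.trans hqc.symm)
    have hne12 : e1 ≠ e2 := fun h => hne i (by rw [h])
    have hdisj : ∀ f1 ∈ ({e1, e2} : Finset E), ∀ f2 ∈ ({e1, e2} : Finset E), f1 ≠ f2 →
        ∀ m : Fin 3, ed f1 m ≠ ed f2 m := by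
      simp only [Finset.mem_insert, Finset.mem_singleton]
      rintro f1 (rfl | rfl) f2 (rfl | rfl) h m
      · exact absurd rfl h
      · exact hne m
      · exact (hne m).symm
      · exact absurd rfl h
    have hreachM : ∀ e ∈ ({e1, e2} : Finset E), ∀ m, hconn ed ⟨j, b⟩ ⟨m, ed e m⟩ := by
      simp only [Finset.mem_insert, Finset.mem_singleton]
      rintro e (rfl | rfl)
      · exact hreach _ h1c
      · exact hreach _ h2c
    have hclosed : ∀ (e : E) (m n : Fin 3),
        (∃ e' ∈ ({e1, e2} : Finset E), ed e' m = ed e m) →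
        ∃ e' ∈ ({e1, e2} : Finset E), ed e' n = ed e n := by
      simp only [Finset.mem_insert, Finset.mem_singleton, exists_eq_or_imp, exists_eq_left]
      intro e m n h
      have h3 := hsome (fun m => ed e1 m = ed e m ∨ ed e2 m = ed e m) m h
      obtain rfl | rfl := hcase
      · obtain ⟨hi, hj, hk⟩ := hS.closed_pair hb h1b h2b (hne i) (hne j) (hne k) e h3
        exact hall (fun n => ed e1 n = ed e n ∨ ed e2 n = ed e n) hi hj hk n
      · have hS' : IsSquare (fun e => ed e k) (fun e => ed e j) c c₁ b b' := by
          unfold IsSquare at hS ⊢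
          grind
        obtain ⟨hi, hk, hj⟩ := hS'.closed_pair hc h1c h2c (hne i) (hne k) (hne j) e
          (h3.imp_right Or.symm)
        exact hall (fun n => ed e1 n = ed e n ∨ ed e2 n = ed e n) hi hj hk n
    have hbM : ∃ e ∈ ({e1, e2} : Finset E), ed e j = b := by
      have := hne j
      simp only [Finset.mem_insert, Finset.mem_singleton, exists_eq_or_imp, exists_eq_left]
      grind
    obtain ⟨hcover, hcard⟩ := component_of_closed_matching hdisj hreachM hbM hclosed
    rw [Finset.card_pair hne12] at hcard
    exact ⟨_, hdisj, hreachM, hcover, Or.inl ⟨Finset.card_pair hne12, hcard⟩⟩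
  · rw [not_or] at hcase
    obtain ⟨e1, e2, e3, e4, p, q, h1, hp, hq, h2, h3, h4, hpw, hcl⟩ :=
      hS.exists_closed_four hb hb' hc hc' hcase.1 hcase.2
    have hreach1 := hbreach e1 h1
    have hreachp := hbreach p hp
    have hreachq := hconn_of_common hreach1 hq
    have hpw' : [e1, e2, e3, e4].Pairwise (fun e f => ∀ m, ed e m ≠ ed f m) :=
      hpw.imp fun h => hall _ h.1 h.2.1 h.2.2
    have hnodup : [e1, e2, e3, e4].Nodup := hpw'.imp fun h he => h i (by rw [he])
    have hdisj : ∀ f1 ∈ [e1, e2, e3, e4].toFinset, ∀ f2 ∈ [e1, e2, e3, e4].toFinset,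
        f1 ≠ f2 → ∀ m : Fin 3, ed f1 m ≠ ed f2 m := by
      intro f1 hf1 f2 hf2 hf
      have : Std.Symm (fun e f : E => ∀ m, ed e m ≠ ed f m) := ⟨fun _ _ h m => (h m).symm⟩
      exact hpw'.forall (List.mem_toFinset.1 hf1)
        (List.mem_toFinset.1 hf2) hf
    have hreachM : ∀ e ∈ [e1, e2, e3, e4].toFinset,
        ∀ m, hconn ed ⟨j, b⟩ ⟨m, ed e m⟩ := by
      simp only [List.mem_toFinset, List.mem_cons, List.not_mem_nil, or_false]
      rintro e (rfl | rfl | rfl | rfl)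
      · exact hreach1
      · exact hconn_of_common hreachp h2
      · exact hconn_of_common hreachp h3
      · exact hconn_of_common hreachq h4
    have hclosed : ∀ (e : E) (m n : Fin 3),
        (∃ e' ∈ [e1, e2, e3, e4].toFinset, ed e' m = ed e m) →
        ∃ e' ∈ [e1, e2, e3, e4].toFinset, ed e' n = ed e n := by
      simp only [List.mem_toFinset]
      intro e m n h
      obtain ⟨hi, hj, hk⟩ :=
        hcl e (hsome (fun m => ∃ e' ∈ [e1, e2, e3, e4], ed e' m = ed e m) m h)
      exact hall (fun n => ∃ e' ∈ [e1, e2, e3, e4], ed e' n = ed e n) hi hj hk n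
    obtain ⟨hcover, hcard⟩ :=
      component_of_closed_matching hdisj hreachM ⟨e1, by simp, h1⟩ hclosed
    have hfour : [e1, e2, e3, e4].toFinset.card = 4 := List.toFinset_card_of_nodup hnodup
    rw [hfour] at hcard
    exact ⟨_, hdisj, hreachM, hcover, Or.inr ⟨hfour, hcard⟩⟩

end Links
end
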